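/- arXiv:math/0308229 — 5 statements merged into one kernel-verified Lean document; each statement's English description precedes it below -/
import Mathlib

section
/- Let V ⊆ U be a right coideal (i.e., Δ(V) ⊆ V ⊗ U) and let ρ: V → X be a ℂ-linear map such that x·ρ(v) = Σ ρ(v₍₁₎)·(x ◁ v₍₂₎) holds in X for every v ∈ V and every x in a generating set X₀ of the algebra X. Then for every v ∈ V the element ξ(v) := Σ j(ρ(v₍₁₎))·i(S(v₍₂₎)) of A commutes with j(x) for every x ∈ X. -/
open scoped TensorProduct

noncomputable section

/-- For a right action `act` (`act f x = x ◁ f`), the Sweedler sum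
`Σ (x ◁ f₍₁₎) * (y ◁ f₍₂₎)`. -/
def sweedlerMulAct {U X : Type*} [AddCommMonoid U] [Module ℂ U]
    [Coalgebra ℂ U] [Ring X] [Algebra ℂ X]
    (act : U →ₗ[ℂ] X →ₗ[ℂ] X) (f : U) (x y : X) : X :=
  TensorProduct.lift ((LinearMap.mul ℂ X).compl₁₂ (act.flip x) (act.flip y))
    (Coalgebra.comul f)

/-- The Sweedler sum `Σ i(f₍₁₎) * j(x ◁ f₍₂₎)` appearing in the cross relation of the
cross product algebra `U ⋉ X` realized inside an ambient algebra `A`. -/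
def crossRHS {U X A : Type*} [Semiring U] [Algebra ℂ U] [Coalgebra ℂ U]
    [Ring X] [Algebra ℂ X] [Ring A] [Algebra ℂ A]
    (i : U →ₐ[ℂ] A) (j : X →ₐ[ℂ] A) (act : U →ₗ[ℂ] X →ₗ[ℂ] X) (x : X) (f : U) : A :=
  TensorProduct.lift
    ((LinearMap.mul ℂ A).compl₁₂ i.toLinearMap (j.toLinearMap ∘ₗ act.flip x))
    (Coalgebra.comul f)

/-- The Sweedler sum `Σ ρ(v₍₁₎) * (x ◁ v₍₂₎)`. -/
def rhoSweedler {U X : Type*} [AddCommMonoid U] [Module ℂ U] [Coalgebra ℂ U]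
    [Ring X] [Algebra ℂ X]
    (act : U →ₗ[ℂ] X →ₗ[ℂ] X) (ρ : U →ₗ[ℂ] X) (x : X) (v : U) : X :=
  TensorProduct.lift ((LinearMap.mul ℂ X).compl₁₂ ρ (act.flip x))
    (Coalgebra.comul v)

/-- The element `ξ(v) = Σ j(ρ(v₍₁₎)) * i(S(v₍₂₎))` of the ambient algebra `A`. -/
def xiElem {U X A : Type*} [Ring U] [HopfAlgebra ℂ U]
    [Ring X] [Algebra ℂ X] [Ring A] [Algebra ℂ A]
    (i : U →ₐ[ℂ] A) (j : X →ₐ[ℂ] A) (ρ : U →ₗ[ℂ] X) (v : U) : A :=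
  TensorProduct.lift
    ((LinearMap.mul ℂ A).compl₁₂ (j.toLinearMap ∘ₗ ρ)
      (i.toLinearMap ∘ₗ HopfAlgebra.antipode (R := ℂ)))
    (Coalgebra.comul v)

end

/-!
Convolution by `f ↦ ε(f) a` is pointwise multiplication by `a ∈ A`, so the Sweedler sums become
products in the convolution algebra `Hom(U, A)`. There `i` is invertible with inverse `i ∘ S`, so
with `g = j(x ◁ ·)` the cross relation `j(x) * i = i * g` turns into `g * (i ∘ S) = (i ∘ S) * j(x)`.
If `j(x) * (j ∘ ρ) = (j ∘ ρ) * g` on `V`, then `ξ = (j ∘ ρ) * (i ∘ S)` satisfies on `V`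
`j(x) * ξ = (j ∘ ρ) * g * (i ∘ S) = ξ * j(x)`; the coideal property keeps the first tensor factor
of `Δ(v)` in `V`. The elements commuting with `ξ(v)` form a subalgebra, so generators suffice.
-/

open WithConv Coalgebra HopfAlgebra

section Convolution

variable {R C A : Type*} [CommSemiring R] [AddCommMonoid C] [Module R C]
  [Semiring A] [Algebra R A]

section CoalgebraStruct

variable [CoalgebraStruct R C]

lemma lift_mul_compl₁₂_comul (f g : C →ₗ[R] A) (c : C) :
    TensorProduct.lift ((LinearMap.mul R A).compl₁₂ f g) (comul c) = (toConv f * toConv g) c :=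
  congr($(TensorProduct.lift_comp_map (LinearMap.mul R A) f g) (comul c)).symm

lemma convMul_apply_congr {V W : Submodule R C} {c : C}
    (hc : comul (R := R) c ∈ LinearMap.range (TensorProduct.mapIncl V W))
    {f f' g g' : WithConv (C →ₗ[R] A)} (hf : ∀ v ∈ V, f v = f' v) (hg : ∀ w ∈ W, g w = g' w) :
    (f * g) c = (f' * g') c := by
  obtain ⟨t, ht⟩ := hc
  have hfV : f.ofConv ∘ₗ V.subtype = f'.ofConv ∘ₗ V.subtype := LinearMap.ext fun v ↦ hf v v.2
  have hgW : g.ofConv ∘ₗ W.subtype = g'.ofConv ∘ₗ W.subtype := LinearMap.ext fun w ↦ hg w w.2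
  simp only [LinearMap.convMul_apply, ← ht, TensorProduct.mapIncl, ← LinearMap.comp_apply,
    ← TensorProduct.map_comp, hfV, hgW]

end CoalgebraStruct

variable [Coalgebra R C]

variable (R C) in
/-- The canonical map from `A` to the convolution algebra `Hom(C, A)`, sending `a` to
`c ↦ ε(c) a`. -/
noncomputable def convConst (a : A) : WithConv (C →ₗ[R] A) :=
  toConv ((counit (R := R) (A := C)).smulRight a)

lemma convConst_mul_apply (a : A) (f : WithConv (C →ₗ[R] A)) (c : C) :
    (convConst R C a * f) c = a * f c := by
  rw [(ℛ R c).convMul_apply]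
  conv_rhs => rw [← sum_counit_smul (ℛ R c)]
  simp [convConst, Finset.mul_sum]

lemma mul_convConst_apply (f : WithConv (C →ₗ[R] A)) (a : A) (c : C) :
    (f * convConst R C a) c = f c * a := by
  rw [(ℛ R c).convMul_apply]
  conv_rhs => rw [← mul_one f, (ℛ R c).convMul_apply]
  simp [convConst, Finset.sum_mul, Algebra.algebraMap_eq_smul_one]

end Convolution

section HopfAlgebra

variable {R U X A : Type*} [CommSemiring R] [Semiring U] [HopfAlgebra R U]
  [Semiring X] [Algebra R X] [Semiring A] [Algebra R A]

/-- An algebra homomorphism `i` out of a Hopf algebra as a unit of the convolution algebra, with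
inverse `i ∘ S`. -/
noncomputable def algHomConvUnit (i : U →ₐ[R] A) : (WithConv (U →ₗ[R] A))ˣ where
  val := toConv i.toLinearMap
  inv := toConv (i.toLinearMap ∘ₗ antipode R)
  val_inv := by
    ext u
    simpa [(ℛ R u).convMul_apply] using
      congr(i $(sum_mul_antipode_eq_algebraMap_counit (ℛ R u)))
  inv_val := by
    ext u
    simpa [(ℛ R u).convMul_apply] using
      congr(i $(sum_antipode_mul_eq_algebraMap_counit (ℛ R u)))

lemma commute_convMul_comp_antipode_apply {i : U →ₐ[R] A} {a : A} {f g : WithConv (U →ₗ[R] A)}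
    {V : Submodule R U} (hi : ∀ u, a * i u = (toConv i.toLinearMap * g) u)
    (hf : ∀ v ∈ V, a * f v = (f * g) v) {v : U}
    (hv : comul (R := R) v ∈ LinearMap.range (TensorProduct.mapIncl V (⊤ : Submodule R U))) :
    Commute a ((f * toConv (i.toLinearMap ∘ₗ antipode R)) v) := by
  set iS := toConv (i.toLinearMap ∘ₗ antipode R)
  have hsemiconj : SemiconjBy (algHomConvUnit i : WithConv (U →ₗ[R] A)) g (convConst R U a) := by
    ext u
    exact (hi u).symm.trans (convConst_mul_apply a (toConv i.toLinearMap) u).symm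
  have hantipode : iS * convConst R U a = g * iS := hsemiconj.units_inv_symm_left
  calc a * (f * iS) v = ((convConst R U a * f) * iS) v := by rw [mul_assoc, convConst_mul_apply]
    _ = ((f * g) * iS) v :=
      convMul_apply_congr hv (fun w hw ↦ (convConst_mul_apply a f w).trans (hf w hw)) fun _ _ ↦ rfl
    _ = ((f * iS) * convConst R U a) v := by rw [mul_assoc, ← hantipode, mul_assoc]
    _ = (f * iS) v * a := mul_convConst_apply _ a v

theorem stmt_1_general (act : U →ₗ[R] X →ₗ[R] X) (i : U →ₐ[R] A) (j : X →ₐ[R] A) (X₀ : Set X)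
    (hcross : ∀ x ∈ X₀, ∀ u,
      j x * i u = (toConv i.toLinearMap * toConv (j.toLinearMap ∘ₗ act.flip x)) u)
    (V : Submodule R U) (ρ : U →ₗ[R] X)
    (hρ : ∀ v ∈ V, ∀ x ∈ X₀, x * ρ v = (toConv ρ * toConv (act.flip x)) v)
    {v : U}
    (hv : comul (R := R) v ∈ LinearMap.range (TensorProduct.mapIncl V (⊤ : Submodule R U)))
    {x : X} (hx : x ∈ Algebra.adjoin R X₀) :
    Commute ((toConv (j.toLinearMap ∘ₗ ρ) * toConv (i.toLinearMap ∘ₗ antipode R)) v) (j x) := by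
  have hjx : j x ∈ Algebra.adjoin R (j '' X₀) :=
    j.map_adjoin X₀ ▸ Subalgebra.mem_map.2 ⟨x, hx, rfl⟩
  refine Algebra.commute_of_mem_adjoin_of_forall_mem_commute hjx ?_
  rintro _ ⟨y, hy, rfl⟩
  refine (commute_convMul_comp_antipode_apply (hcross y hy) (fun w hw ↦ ?_) hv).symm
  calc j y * j (ρ w) = j ((toConv ρ * toConv (act.flip y)) w) := by rw [← map_mul, hρ w hw y hy]
    _ = (toConv (j.toLinearMap ∘ₗ ρ) * toConv (j.toLinearMap ∘ₗ act.flip y)) w :=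
      congr($(LinearMap.algHom_comp_convMul_distrib j (toConv ρ) (toConv (act.flip y))) w)

end HopfAlgebra

/-- Let `U` be a Hopf algebra over ℂ, `X` a unital right `U`-module algebra
(with right action `act f x = x ◁ f`), and let the cross product algebra `U ⋉ X` be
modelled inside an ambient unital ℂ-algebra `A` via unital algebra homomorphisms
`i : U → A`, `j : X → A` satisfying `j(x) i(f) = Σ i(f₍₁₎) j(x ◁ f₍₂₎)`.
If `V ⊆ U` is a right coideal (`Δ(V) ⊆ V ⊗ U`) and `ρ : V → X` is a linear map
(here extended to `U`) with `x ρ(v) = Σ ρ(v₍₁₎)(x ◁ v₍₂₎)` for all `v ∈ V` and all `x`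
in a generating set `X₀` of `X`, then for every `v ∈ V` the element
`ξ(v) = Σ j(ρ(v₍₁₎)) i(S(v₍₂₎))` commutes with `j(x)` for every `x ∈ X`. -/
theorem stmt_1 {U X A : Type*} [Ring U] [HopfAlgebra ℂ U]
    [Ring X] [Algebra ℂ X] [Ring A] [Algebra ℂ A]
    (act : U →ₗ[ℂ] X →ₗ[ℂ] X)
    -- `X` is a right `U`-module:
    (hact_mul : ∀ (f g : U) (x : X), act (f * g) x = act g (act f x))
    (hact_one : ∀ x : X, act 1 x = x)
    -- `X` is a right `U`-module algebra:
    (hact_prod : ∀ (f : U) (x y : X), act f (x * y) = sweedlerMulAct act f x y)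
    (hact_unit : ∀ f : U, act f 1 = Coalgebra.counit (R := ℂ) f • (1 : X))
    -- the ambient algebra model of the cross product algebra `U ⋉ X`:
    (i : U →ₐ[ℂ] A) (j : X →ₐ[ℂ] A)
    (hcross : ∀ (x : X) (f : U), j x * i f = crossRHS i j act x f)
    -- `V` is a right coideal of `U`:
    (V : Submodule ℂ U)
    (hV : ∀ v ∈ V, Coalgebra.comul (R := ℂ) v ∈
      LinearMap.range (TensorProduct.mapIncl V (⊤ : Submodule ℂ U)))
    -- `X₀` generates `X` as an algebra:
    (X₀ : Set X) (hgen : Algebra.adjoin ℂ X₀ = ⊤)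
    -- `ρ` satisfies `x ρ(v) = Σ ρ(v₍₁₎)(x ◁ v₍₂₎)` on `V` and `X₀`:
    (ρ : U →ₗ[ℂ] X)
    (hρ : ∀ v ∈ V, ∀ x ∈ X₀, x * ρ v = rhoSweedler act ρ x v) :
    ∀ v ∈ V, ∀ x : X, xiElem i j ρ v * j x = j x * xiElem i j ρ v := by
  intro v hv x
  rw [xiElem, lift_mul_compl₁₂_comul]
  exact stmt_1_general act i j X₀ (fun x _ f ↦ (hcross x f).trans (lift_mul_compl₁₂_comul _ _ f))
    V ρ (fun v hv x hx ↦ (hρ v hv x hx).trans (lift_mul_compl₁₂_comul _ _ v)) (hV v hv)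
    (hgen ▸ Algebra.mem_top)
end

section
/- With N := zX − γ and N̄ := X̄z̄ − γ, the following identities hold in A: zN = q²Nz, z̄N = Nz̄, N̄N = NN̄, and z̄zN̄N = N̄Nz̄z. -/
/-!
The relation `a * b = c • (b * a)` is multiplicative in each argument, the scalars `c` being
multiplied. A `q`-Weyl relation `a * b = p • (b * a) + 1` becomes homogeneous after a shift by the
fixed point `γ` of `x ↦ p x + 1`, namely `a * b - γ = p • (b * a - γ)`, so `a * b - γ` commutes with
`a` and `b` up to the factor `p`. Both `(z, X)` and `(Xb, zb)` satisfy a `q`-Weyl relation; all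
other pairs of generators commute up to a power of `p`, and the resulting factors cancel.
-/

section QCommute

variable {R A : Type*} [CommSemiring R] [Semiring A] [Algebra R A]

/-- The elements `a` and `b` commute up to the scalar factor `c`, which is picked up when `a` is
moved from the left to the right of `b`. -/
def QCommute (c : R) (a b : A) : Prop :=
  a * b = c • (b * a)

variable {c d : R} {a b x : A}

theorem qCommute_one_iff : QCommute (1 : R) a b ↔ Commute a b := by
  rw [QCommute, one_smul, commute_iff_eq]

theorem QCommute.symm {u : Rˣ} (h : QCommute (u : R) a b) :
    QCommute ((u⁻¹ : Rˣ) : R) b a := by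
  rw [QCommute, h, smul_smul, Units.inv_mul, one_smul]

theorem QCommute.mul_left (ha : QCommute c a x) (hb : QCommute d b x) :
    QCommute (c * d) (a * b) x :=
  calc
    a * b * x = d • (a * x * b) := by rw [mul_assoc, hb, mul_smul_comm, mul_assoc]
    _ = (c * d) • (x * (a * b)) := by
      rw [ha, smul_mul_assoc, smul_smul, mul_comm d, mul_assoc]

theorem QCommute.mul_right (ha : QCommute c x a) (hb : QCommute d x b) :
    QCommute (c * d) x (a * b) :=
  calc
    x * (a * b) = c • (a * (x * b)) := by rw [← mul_assoc, ha, smul_mul_assoc, mul_assoc]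
    _ = (c * d) • (a * b * x) := by rw [hb, mul_smul_comm, smul_smul, mul_assoc]

theorem QCommute.commute_mul_left (ha : QCommute c a x) (hb : QCommute d b x) (hcd : c * d = 1) :
    Commute (a * b) x :=
  qCommute_one_iff.mp (hcd ▸ ha.mul_left hb)

theorem QCommute.commute_mul_right (ha : QCommute c x a) (hb : QCommute d x b) (hcd : c * d = 1) :
    Commute x (a * b) :=
  qCommute_one_iff.mp (hcd ▸ ha.mul_right hb)

end QCommute

section QWeyl

variable {R A : Type*} [CommRing R] [Ring A] [Algebra R A] {p γ : R} {a b : A}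

theorem commute_sub_smul_one (h : Commute a b) (γ : R) : Commute a (b - γ • (1 : A)) :=
  h.sub_right ((Commute.one_right a).smul_right γ)

theorem qWeyl_swap {u : Rˣ}
    (h : a * b = ((u⁻¹ : Rˣ) : R) • (b * a) - ((u⁻¹ : Rˣ) : R) • (1 : A)) :
    b * a = (u : R) • (a * b) + 1 := by
  rw [h, ← smul_sub, smul_smul, Units.mul_inv, one_smul, sub_add_cancel]

theorem qWeyl_sub_smul_one (h : a * b = p • (b * a) + 1) (hγ : (1 - p) * γ = 1) :
    a * b - γ • (1 : A) = p • (b * a - γ • (1 : A)) := by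
  have fixed_point : γ = p * γ + 1 := by linear_combination hγ
  calc
    a * b - γ • (1 : A) = p • (b * a) + 1 - (p * γ + 1) • (1 : A) := by rw [h, ← fixed_point]
    _ = p • (b * a - γ • (1 : A)) := by module

theorem qCommute_left_qWeyl (h : a * b = p • (b * a) + 1) (hγ : (1 - p) * γ = 1) :
    QCommute p a (a * b - γ • (1 : A)) :=
  calc
    a * (a * b - γ • (1 : A)) = p • (a * (b * a - γ • (1 : A))) := by
      rw [qWeyl_sub_smul_one h hγ, mul_smul_comm]
    _ = p • ((a * b - γ • (1 : A)) * a) := by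
      rw [mul_sub, sub_mul, mul_assoc, mul_smul_one, smul_one_mul]

theorem qCommute_qWeyl_right (h : a * b = p • (b * a) + 1) (hγ : (1 - p) * γ = 1) :
    QCommute p (a * b - γ • (1 : A)) b :=
  calc
    (a * b - γ • (1 : A)) * b = p • ((b * a - γ • (1 : A)) * b) := by
      rw [qWeyl_sub_smul_one h hγ, smul_mul_assoc]
    _ = p • (b * (a * b - γ • (1 : A))) := by
      rw [mul_sub, sub_mul, mul_assoc, mul_smul_one, smul_one_mul]

end QWeyl

theorem stmt_2_general {R A : Type*} [CommRing R] [Ring A] [Algebra R A]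
    (p : Rˣ) (γ : R) (hγ : (1 - (p : R)) * γ = 1)
    (z zb X Xb : A)
    (hzbz : zb * z = (p : R) • (z * zb))
    (hXbX : Xb * X = (p : R) • (X * Xb))
    (hzX : z * X = (p : R) • (X * z) + 1)
    (hzXb : z * Xb = (p : R) • (Xb * z))
    (hzbX : zb * X = ((p⁻¹ : Rˣ) : R) • (X * zb))
    (hzbXb : zb * Xb = ((p⁻¹ : Rˣ) : R) • (Xb * zb) - ((p⁻¹ : Rˣ) : R) • (1 : A))
    (N Nb : A)
    (hN : N = z * X - γ • (1 : A))
    (hNb : Nb = Xb * zb - γ • (1 : A)) :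
    z * N = (p : R) • (N * z) ∧
    zb * N = N * zb ∧
    Nb * N = N * Nb ∧
    zb * z * (Nb * N) = Nb * N * (zb * z) := by
  subst hN hNb
  have hXbz : QCommute ((p⁻¹ : Rˣ) : R) Xb z := QCommute.symm hzXb
  have z_N : QCommute (p : R) z (z * X - γ • (1 : A)) := qCommute_left_qWeyl hzX hγ
  have zb_N : Commute zb (z * X - γ • (1 : A)) :=
    commute_sub_smul_one (QCommute.commute_mul_right hzbz hzbX p.mul_inv) γ
  have Xb_N : Commute Xb (z * X - γ • (1 : A)) :=
    commute_sub_smul_one (hXbz.commute_mul_right hXbX p.inv_mul) γ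
  have Nb_N : Commute (Xb * zb - γ • (1 : A)) (z * X - γ • (1 : A)) :=
    (commute_sub_smul_one (Xb_N.mul_left zb_N).symm γ).symm
  have z_Nb : Commute z (Xb * zb - γ • (1 : A)) :=
    commute_sub_smul_one (hXbz.commute_mul_left hzbz p.inv_mul).symm γ
  have zb_Nb : QCommute ((p⁻¹ : Rˣ) : R) zb (Xb * zb - γ • (1 : A)) :=
    (qCommute_qWeyl_right (qWeyl_swap hzbXb) hγ).symm
  have zbz_Nb := zb_Nb.mul_left (qCommute_one_iff.mpr z_Nb)
  have zbz_N := (qCommute_one_iff.mpr zb_N).mul_left z_N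
  have factors_cancel : ((p⁻¹ : Rˣ) : R) * 1 * (1 * p) = 1 := by simp
  exact ⟨z_N, zb_N, Nb_N, zbz_Nb.commute_mul_right zbz_N factors_cancel⟩

/-- In a unital ℂ-algebra `A` with elements `z, zb, X, Xb` satisfying the
defining relations of the cross product ∗-algebra `U₀ ⋉ O(C_q)` (with `q ≠ 0`, `q² ≠ 1`,
`γ = (1 - q²)⁻¹`), the elements `N := z*X - γ•1` and `Nb := Xb*zb - γ•1` satisfy
`zN = q²Nz`, `zb N = N zb`, `Nb N = N Nb` and `zb z Nb N = Nb N zb z`. -/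
theorem stmt_2 {A : Type*} [Ring A] [Algebra ℂ A]
    (q : ℂ) (hq : q ≠ 0) (hq2 : q ^ 2 ≠ 1)
    (z zb X Xb : A)
    (h1 : zb * z = q ^ 2 • (z * zb))
    (h2 : Xb * X = q ^ 2 • (X * Xb))
    (h3 : z * X = q ^ 2 • (X * z) + 1)
    (h4 : z * Xb = q ^ 2 • (Xb * z))
    (h5 : zb * X = (q ^ 2)⁻¹ • (X * zb))
    (h6 : zb * Xb = (q ^ 2)⁻¹ • (Xb * zb) - (q ^ 2)⁻¹ • (1 : A))
    (N Nb : A)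
    (hN : N = z * X - (1 - q ^ 2)⁻¹ • (1 : A))
    (hNb : Nb = Xb * zb - (1 - q ^ 2)⁻¹ • (1 : A)) :
    z * N = q ^ 2 • (N * z) ∧
    zb * N = N * zb ∧
    Nb * N = N * Nb ∧
    zb * z * (Nb * N) = Nb * N * (zb * z) :=
  stmt_2_general (Units.mk0 (q ^ 2) (pow_ne_zero 2 hq)) (1 - q ^ 2)⁻¹
    (mul_inv_cancel₀ (sub_ne_zero.mpr hq2.symm)) z zb X Xb h1 h2 h3 h4 h5 h6 N Nb hN hNb
end

section
/- Under these hypotheses, z and z† are injective on D: if zη = 0 for some η ∈ D then η = 0, and likewise if z†η = 0 then η = 0. -/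
/-!
A vector of the form `z ξ` that is killed by `z†` vanishes, because
`⟨z ξ, z ξ⟩ = ⟨ξ, z† (z ξ)⟩`. Together with the `q`-commutation of `z` and `z†` this makes their
kernels equal, and the twisted commutator relation puts `ker z` inside the range of `z`, with
`η = z (X η)`. So a vector of either kernel lies in the range of `z` and is killed by `z†`.
-/

section FormalAdjoint

variable {𝕜 E F : Type*} [RCLike 𝕜] [SeminormedAddCommGroup E] [InnerProductSpace 𝕜 E]

theorem inner_formalAdjoint_left [SeminormedAddCommGroup F] [InnerProductSpace 𝕜 F]
    {f : E → F} {g : F → E} (hadj : ∀ x y, inner 𝕜 (f x) y = inner 𝕜 x (g y)) (y : F) (x : E) :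
    inner 𝕜 (g y) x = inner 𝕜 y (f x) := by
  rw [← inner_conj_symm, ← hadj, inner_conj_symm]

theorem apply_eq_zero_of_formalAdjoint_apply_apply_eq_zero
    [NormedAddCommGroup F] [InnerProductSpace 𝕜 F] {f : E → F} {g : F → E}
    (hadj : ∀ x y, inner 𝕜 (f x) y = inner 𝕜 x (g y)) {x : E} (hx : g (f x) = 0) :
    f x = 0 := by
  rw [← inner_self_eq_zero (𝕜 := 𝕜), hadj, hx, inner_zero_right]

end FormalAdjoint

theorem apply_apply_eq_self_of_twisted_commutator {R M : Type*} [Ring R] [AddCommGroup M]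
    [Module R M] {z X : M →ₗ[R] M} {d : R} (hzX : ∀ η, z (X η) - d • X (z η) = η)
    {η : M} (hη : z η = 0) : z (X η) = η := by
  simpa only [hη, map_zero, smul_zero, sub_zero] using hzX η

section TwistedNormal

variable {𝕜 D : Type*} [RCLike 𝕜] [NormedAddCommGroup D] [InnerProductSpace 𝕜 D]
  {z zd : D →ₗ[𝕜] D} {c : 𝕜}

theorem apply_eq_zero_of_formalAdjoint_apply_eq_zero
    (hadj : ∀ ξ η, inner 𝕜 (z ξ) η = inner 𝕜 ξ (zd η)) (hcomm : ∀ η, zd (z η) = c • z (zd η))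
    {η : D} (hη : zd η = 0) : z η = 0 := by
  apply apply_eq_zero_of_formalAdjoint_apply_apply_eq_zero hadj
  rw [hcomm, hη, map_zero, smul_zero]

theorem formalAdjoint_apply_eq_zero_of_apply_eq_zero
    (hadj : ∀ ξ η, inner 𝕜 (z ξ) η = inner 𝕜 ξ (zd η)) (hcomm : ∀ η, zd (z η) = c • z (zd η))
    (hc : c ≠ 0) {η : D} (hη : z η = 0) : zd η = 0 := by
  apply apply_eq_zero_of_formalAdjoint_apply_apply_eq_zero (inner_formalAdjoint_left hadj)
  have hsmul : c • z (zd η) = 0 := by rw [← hcomm, hη, map_zero]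
  exact (smul_eq_zero.mp hsmul).resolve_left hc

theorem stmt_5_general {X : D →ₗ[𝕜] D} {d : 𝕜}
    (hadj : ∀ ξ η, inner 𝕜 (z ξ) η = inner 𝕜 ξ (zd η)) (hcomm : ∀ η, zd (z η) = c • z (zd η))
    (hzX : ∀ η, z (X η) - d • X (z η) = η) :
    Function.Injective z ∧ Function.Injective zd := by
  have eq_zero_of_both {η : D} (hz : z η = 0) (hzd : zd η = 0) : η = 0 := by
    have hrange : z (X η) = η := apply_apply_eq_self_of_twisted_commutator hzX hz
    rw [← hrange] at hzd ⊢
    exact apply_eq_zero_of_formalAdjoint_apply_apply_eq_zero hadj hzd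
  rw [injective_iff_map_eq_zero, injective_iff_map_eq_zero]
  refine ⟨fun η hz => eq_zero_of_both hz ?_, fun η hzd => eq_zero_of_both ?_ hzd⟩
  · rcases eq_or_ne c 0 with rfl | hc
    · rw [← apply_apply_eq_self_of_twisted_commutator hzX hz, hcomm, zero_smul]
    · exact formalAdjoint_apply_eq_zero_of_apply_eq_zero hadj hcomm hc hz
  · exact apply_eq_zero_of_formalAdjoint_apply_eq_zero hadj hcomm hzd

end TwistedNormal

/-- Let `D` be a complex inner product space, `z, zd, X : D → D` linear maps
with `⟨zξ, η⟩ = ⟨ξ, zd η⟩`, satisfying `zd ∘ z = q² z ∘ zd` and `z ∘ X - q² X ∘ z = id`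
(with `0 < q < 1`).  Then `z` and `zd` are injective: `zη = 0 → η = 0` and
`zd η = 0 → η = 0`. -/
theorem stmt_5 {D : Type*} [NormedAddCommGroup D] [InnerProductSpace ℂ D]
    (q : ℝ) (hq0 : 0 < q) (hq1 : q < 1)
    (z zd X : D →ₗ[ℂ] D)
    (hadj : ∀ ξ η : D, (inner ℂ (z ξ) η : ℂ) = inner ℂ ξ (zd η))
    (hrel1 : ∀ η : D, zd (z η) = ((q : ℂ) ^ 2) • z (zd η))
    (hrel2 : ∀ η : D, z (X η) - ((q : ℂ) ^ 2) • X (z η) = η) :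
    (∀ η : D, z η = 0 → η = 0) ∧ (∀ η : D, zd η = 0 → η = 0) := by
  simpa only [injective_iff_map_eq_zero] using stmt_5_general hadj hrel1 hrel2
end

section
/- The maps z, z†, E, F, K̂, K̂⁻¹ form a ∗-representation of the cross product ∗-algebra U_q(e₂)⋉O(C_q) on D: ⟨zξ, η⟩ = ⟨ξ, z†η⟩, ⟨Eξ, η⟩ = ⟨ξ, Fη⟩, ⟨K̂ξ, η⟩ = ⟨ξ, K̂η⟩ for all ξ, η ∈ D, and on D the relations hold: z†z = q²zz†; K̂K̂⁻¹ = K̂⁻¹K̂ = id; K̂F = qFK̂; K̂E = q⁻¹EK̂; EF = FE; zK̂ = qK̂z; zE = qEz; zF = qFz + q^{−1/2}K̂⁻¹; z†K̂ = q⁻¹K̂z†; z†E = q⁻¹Ez† − q^{−3/2}K̂⁻¹; z†F = q⁻¹Fz†. -/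
noncomputable section

/-- The inner product `⟨η, ζ⟩ = Σᵢ ⟨η(i), ζ(i)⟩` on the space of finitely supported
functions `ι →₀ H` with values in a complex inner product space `H`. -/
def finsuppInner {ι H : Type*} [NormedAddCommGroup H] [InnerProductSpace ℂ H]
    (η ζ : ι →₀ H) : ℂ :=
  η.sum fun i x => (inner ℂ x (ζ i) : ℂ)

namespace Stmt8

variable {K : Type*} [NormedAddCommGroup K] [InnerProductSpace ℂ K] [CompleteSpace K]

/-- `z η_{nk} = q^{-n} A η_{n-1,k}`. -/
def zOp (q : ℝ) (A : K →L[ℂ] K) : Module.End ℂ (ℤ × ℤ →₀ K) :=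
  Finsupp.lsum ℂ fun p => (Finsupp.lsingle (p.1 - 1, p.2)).comp
    (((q : ℂ) ^ (-p.1)) • (A : K →ₗ[ℂ] K))

/-- `z† η_{nk} = q^{-(n+1)} A η_{n+1,k}`. -/
def zdOp (q : ℝ) (A : K →L[ℂ] K) : Module.End ℂ (ℤ × ℤ →₀ K) :=
  Finsupp.lsum ℂ fun p => (Finsupp.lsingle (p.1 + 1, p.2)).comp
    (((q : ℂ) ^ (-(p.1 + 1))) • (A : K →ₗ[ℂ] K))

/-- `F η_{nk} = q^{-1/2}qⁿ A⁻¹BH⁻¹ η_{n,k-1} + q^{1/2}(1-q²)⁻¹qᵏ A⁻¹H⁻¹ η_{n+1,k}`. -/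
def FOp (q : ℝ) (A B H : K →L[ℂ] K) [Invertible A] [Invertible H] :
    Module.End ℂ (ℤ × ℤ →₀ K) :=
  Finsupp.lsum ℂ fun p =>
    (Finsupp.lsingle (p.1, p.2 - 1)).comp
      (((Real.sqrt q : ℂ)⁻¹ * (q : ℂ) ^ p.1) • ((⅟A * B * ⅟H : K →L[ℂ] K) : K →ₗ[ℂ] K))
    + (Finsupp.lsingle (p.1 + 1, p.2)).comp
      (((Real.sqrt q : ℂ) * (1 - (q : ℂ) ^ 2)⁻¹ * (q : ℂ) ^ p.2) •
        ((⅟A * ⅟H : K →L[ℂ] K) : K →ₗ[ℂ] K))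

/-- `E η_{nk} = q^{-1/2}qⁿ A⁻¹BH⁻¹ η_{n,k+1} + q^{1/2}(1-q²)⁻¹qᵏ A⁻¹H⁻¹ η_{n-1,k}`. -/
def EOp (q : ℝ) (A B H : K →L[ℂ] K) [Invertible A] [Invertible H] :
    Module.End ℂ (ℤ × ℤ →₀ K) :=
  Finsupp.lsum ℂ fun p =>
    (Finsupp.lsingle (p.1, p.2 + 1)).comp
      (((Real.sqrt q : ℂ)⁻¹ * (q : ℂ) ^ p.1) • ((⅟A * B * ⅟H : K →L[ℂ] K) : K →ₗ[ℂ] K))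
    + (Finsupp.lsingle (p.1 - 1, p.2)).comp
      (((Real.sqrt q : ℂ) * (1 - (q : ℂ) ^ 2)⁻¹ * (q : ℂ) ^ p.2) •
        ((⅟A * ⅟H : K →L[ℂ] K) : K →ₗ[ℂ] K))

/-- `K̂ η_{nk} = q^{n-k} H η_{nk}`. -/
def KOp (q : ℝ) (H : K →L[ℂ] K) : Module.End ℂ (ℤ × ℤ →₀ K) :=
  Finsupp.lsum ℂ fun p => (Finsupp.lsingle p).comp
    (((q : ℂ) ^ (p.1 - p.2)) • (H : K →ₗ[ℂ] K))

/-- `K̂⁻¹ η_{nk} = q^{-(n-k)} H⁻¹ η_{nk}`. -/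
def KinvOp (q : ℝ) (H : K →L[ℂ] K) [Invertible H] : Module.End ℂ (ℤ × ℤ →₀ K) :=
  Finsupp.lsum ℂ fun p => (Finsupp.lsingle p).comp
    (((q : ℂ) ^ (-(p.1 - p.2))) • ((⅟H : K →L[ℂ] K) : K →ₗ[ℂ] K))

end Stmt8

/-!
Every map in question is a linear combination of shifts `η_p ↦ q^{f(p)} (Tη)_{p + v}` of the
lattice, where the exponent `f` is additive. Two such shifts, with data `(v, f, S)` and `(w, g, T)`,
`q`-commute with factor `q^{f(w) - g(v)}` as soon as `S` and `T` commute, and the formal adjoint of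
the first is `q^{-f(v)}` times the shift with data `(-v, f, S*)`. Split `E = q^{-1/2}E₁ + γE₂` and
`F = q^{-1/2}F₁ + γF₂` with `γ = q^{1/2}(1 - q²)⁻¹`. All homogeneous relations are then read off
from the factors. For the pairs `(z, F₂)` and `(z†, E₂)` the factor is the wrong one, but the shift
vectors cancel and `A · A⁻¹H⁻¹ = H⁻¹`, so the products in both orders are multiples of `K̂⁻¹` and
make up the inhomogeneous term.
-/

namespace Stmt8

section QCommute

variable {R 𝒜 : Type*} [CommSemiring R] [Semiring 𝒜] [Algebra R 𝒜] {a : R} {x y z : 𝒜}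

/-- `x` and `y` `q`-commute with factor `a`: moving `x` to the right of `y` costs the scalar `a`. -/
def QCommute (a : R) (x y : 𝒜) : Prop :=
  x * y = a • (y * x)

theorem QCommute.smul_left (h : QCommute a x y) (b : R) : QCommute a (b • x) y := by
  rw [QCommute, smul_mul_assoc, mul_smul_comm, h, smul_comm]

theorem QCommute.smul_right (h : QCommute a x y) (b : R) : QCommute a x (b • y) := by
  rw [QCommute, smul_mul_assoc, mul_smul_comm, h, smul_comm]

theorem QCommute.add_right (hy : QCommute a x y) (hz : QCommute a x z) :
    QCommute a x (y + z) := by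
  rw [QCommute, mul_add, add_mul, smul_add, hy, hz]

theorem QCommute.mul_smul_add_smul {b c d l r : R} {k : 𝒜} (hy : QCommute a x y)
    (hxz : x * z = l • k) (hzx : z * x = r • k) (hc : c * l = a * c * r + d) :
    x * (b • y + c • z) = a • ((b • y + c • z) * x) + d • k := by
  rw [mul_add, add_mul, smul_add, hy.smul_right, mul_smul_comm, hxz, smul_mul_assoc c, hzx,
    add_assoc, smul_smul, smul_smul, smul_smul, ← add_smul, hc]

end QCommute

section QShift

variable {ι 𝕜 M : Type*} [Field 𝕜] [AddCommMonoid M] [Module 𝕜 M]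

/-- The shift of `ι →₀ M` by `v` with weight `q ^ f` and operator part `T`: it sends the function
supported at `p` with value `x` to the one supported at `p + v` with value `q ^ f p • T x`. -/
def qShift [AddMonoid ι] (q : 𝕜) (v : ι) (f : ι →+ ℤ) (T : Module.End 𝕜 M) :
    Module.End 𝕜 (ι →₀ M) :=
  Finsupp.lsum 𝕜 fun p => (Finsupp.lsingle (p + v)).comp (q ^ f p • T)

@[simp]
theorem qShift_single [AddMonoid ι] (q : 𝕜) (v : ι) (f : ι →+ ℤ) (T : Module.End 𝕜 M) (p : ι)
    (x : M) : qShift q v f T (Finsupp.single p x) = Finsupp.single (p + v) (q ^ f p • T x) := by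
  simp [qShift]

theorem qShift_apply_add [AddRightCancelMonoid ι] (q : 𝕜) (v : ι) (f : ι →+ ℤ)
    (T : Module.End 𝕜 M) (ξ : ι →₀ M) (p : ι) :
    qShift q v f T ξ (p + v) = q ^ f p • T (ξ p) := by
  classical
  induction ξ using Finsupp.induction_linear with
  | zero => simp
  | add ξ η hξ hη => simp [hξ, hη]
  | single r x => by_cases h : r = p <;> simp [h]

theorem qShift_zero_one [AddMonoid ι] (q : 𝕜) :
    qShift q (0 : ι) 0 (1 : Module.End 𝕜 M) = 1 :=
  Finsupp.lhom_ext fun p x => by simp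

theorem qShift_mul [AddMonoid ι] {q : 𝕜} (hq : q ≠ 0) (v w : ι) (f g : ι →+ ℤ)
    (S T : Module.End 𝕜 M) :
    qShift q v f S * qShift q w g T = q ^ f w • qShift q (w + v) (f + g) (S * T) :=
  Finsupp.lhom_ext fun p x => by
    simp [add_assoc, zpow_add₀ hq, mul_smul, smul_comm (q ^ f w)]

variable [AddCommMonoid ι] {q : 𝕜} {v w : ι} {f g : ι →+ ℤ} {S T : Module.End 𝕜 M}

theorem qShift_qCommute (hq : q ≠ 0) (hST : Commute S T) {a : 𝕜} (ha : a = q ^ (f w - g v)) :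
    QCommute a (qShift q v f S) (qShift q w g T) := by
  rw [QCommute, qShift_mul hq, qShift_mul hq, smul_smul, ha, ← zpow_add₀ hq, sub_add_cancel,
    hST.eq, add_comm v w, add_comm g f]

theorem qShift_commute (hq : q ≠ 0) (hST : Commute S T) (hfg : f w = g v) :
    Commute (qShift q v f S) (qShift q w g T) := by
  rw [Commute, SemiconjBy, qShift_mul hq, qShift_mul hq, hfg, hST.eq, add_comm v w, add_comm g f]

end QShift

section FormalAdjoint

variable {ι V : Type*} [NormedAddCommGroup V] [InnerProductSpace ℂ V]

theorem finsuppInner_zero_left (ζ : ι →₀ V) : finsuppInner 0 ζ = 0 :=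
  Finsupp.sum_zero_index

theorem finsuppInner_add_left (ξ η ζ : ι →₀ V) :
    finsuppInner (ξ + η) ζ = finsuppInner ξ ζ + finsuppInner η ζ :=
  Finsupp.sum_add_index' (fun _ => inner_zero_left _) fun _ _ _ => inner_add_left _ _ _

theorem finsuppInner_add_right (ξ η ζ : ι →₀ V) :
    finsuppInner ξ (η + ζ) = finsuppInner ξ η + finsuppInner ξ ζ := by
  simp only [finsuppInner, Finsupp.add_apply, inner_add_right, Finsupp.sum_add]

theorem finsuppInner_single_left (p : ι) (x : V) (ζ : ι →₀ V) :
    finsuppInner (Finsupp.single p x) ζ = inner ℂ x (ζ p) :=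
  Finsupp.sum_single_index (inner_zero_left _)

theorem finsuppInner_smul_left (a : ℂ) (ξ ζ : ι →₀ V) :
    finsuppInner (a • ξ) ζ = starRingEnd ℂ a * finsuppInner ξ ζ := by
  induction ξ using Finsupp.induction_linear with
  | zero => rw [smul_zero, finsuppInner_zero_left, mul_zero]
  | add ξ η hξ hη => rw [smul_add, finsuppInner_add_left, finsuppInner_add_left, hξ, hη, mul_add]
  | single p x =>
    rw [Finsupp.smul_single, finsuppInner_single_left, finsuppInner_single_left, inner_smul_left]

theorem finsuppInner_smul_right (a : ℂ) (ξ ζ : ι →₀ V) :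
    finsuppInner ξ (a • ζ) = a * finsuppInner ξ ζ := by
  simp only [finsuppInner, Finsupp.sum, Finsupp.smul_apply, inner_smul_right, Finset.mul_sum]

/-- `T` is a formal adjoint of `S` for the inner product `finsuppInner` on `ι →₀ V`. Both maps are
defined on all of `ι →₀ V` and may be unbounded. -/
def IsFormalAdjoint (S T : Module.End ℂ (ι →₀ V)) : Prop :=
  ∀ ξ η : ι →₀ V, finsuppInner (S ξ) η = finsuppInner ξ (T η)

theorem IsFormalAdjoint.add {S S' T T' : Module.End ℂ (ι →₀ V)} (h : IsFormalAdjoint S T)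
    (h' : IsFormalAdjoint S' T') : IsFormalAdjoint (S + S') (T + T') := fun ξ η => by
  rw [LinearMap.add_apply, LinearMap.add_apply, finsuppInner_add_left, finsuppInner_add_right,
    h, h']

theorem IsFormalAdjoint.real_smul {S T : Module.End ℂ (ι →₀ V)} (h : IsFormalAdjoint S T) (a : ℝ) :
    IsFormalAdjoint ((a : ℂ) • S) ((a : ℂ) • T) := fun ξ η => by
  rw [LinearMap.smul_apply, LinearMap.smul_apply, finsuppInner_smul_left, finsuppInner_smul_right,
    Complex.conj_ofReal, h]

theorem isFormalAdjoint_qShift [AddGroup ι] {q : ℝ} (hq : (q : ℂ) ≠ 0) (v : ι) (f : ι →+ ℤ)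
    {S T : Module.End ℂ V} (hST : ∀ x y, inner ℂ (S x) y = inner ℂ x (T y)) :
    IsFormalAdjoint (qShift (q : ℂ) v f S) ((q : ℂ) ^ (-f v) • qShift (q : ℂ) (-v) f T) := by
  intro ξ η
  induction ξ using Finsupp.induction_linear with
  | zero => simp only [map_zero, finsuppInner_zero_left]
  | add ξ ξ' hξ hξ' => simp only [map_add, finsuppInner_add_left, hξ, hξ']
  | single p x =>
    have hshift : qShift (q : ℂ) (-v) f T η p = (q : ℂ) ^ f (p + v) • T (η (p + v)) := by
      rw [← qShift_apply_add, add_neg_cancel_right]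
    rw [qShift_single, finsuppInner_single_left, finsuppInner_single_left, LinearMap.smul_apply,
      Finsupp.smul_apply, hshift, smul_smul, ← zpow_add₀ hq, map_add f, neg_add_cancel_comm_assoc,
      inner_smul_left, inner_smul_right, map_zpow₀, Complex.conj_ofReal, hST]

theorem isSymmetric_of_mul_eq_one {S T : Module.End ℂ V} (hS : S.IsSymmetric) (hST : S * T = 1) :
    T.IsSymmetric := by
  have hST_apply (x : V) : S (T x) = x := LinearMap.congr_fun hST x
  intro x y
  calc inner ℂ (T x) y = inner ℂ (T x) (S (T y)) := by rw [hST_apply]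
    _ = inner ℂ (S (T x)) (T y) := (hS _ _).symm
    _ = inner ℂ x (T y) := by rw [hST_apply]

end FormalAdjoint

theorem commute_toLinearMap {R M : Type*} [Semiring R] [TopologicalSpace M] [AddCommMonoid M]
    [ContinuousAdd M] [Module R M] {S T : M →L[R] M} (hST : Commute S T) :
    Commute (S : M →ₗ[R] M) (T : M →ₗ[R] M) :=
  hST.map ContinuousLinearMap.toLinearMapRingHom

section Monoid

variable {G : Type*} [Monoid G] {a b h t : G} [Invertible a] [Invertible h]

theorem commute_invOf_mul_invOf (hta : Commute t a) (hth : Commute t h) :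
    Commute t (⅟a * ⅟h) :=
  hta.invOf_right.mul_right hth.invOf_right

theorem commute_invOf_mul_mul_invOf (hta : Commute t a) (htb : Commute t b) (hth : Commute t h) :
    Commute t (⅟a * b * ⅟h) :=
  (hta.invOf_right.mul_right htb).mul_right hth.invOf_right

end Monoid

section Operators

variable {K : Type*} [NormedAddCommGroup K] [InnerProductSpace ℂ K]

section Decomposition

variable (q : ℝ) (A B H : K →L[ℂ] K)

theorem zOp_eq_qShift :
    zOp q A = qShift (q : ℂ) (-1, 0) (-AddMonoidHom.fst ℤ ℤ) (A : K →ₗ[ℂ] K) :=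
  Finsupp.lhom_ext fun p x => by simp [zOp, Prod.add_def, sub_eq_add_neg]

theorem zdOp_eq_smul_qShift (hq : (q : ℂ) ≠ 0) :
    zdOp q A = (q : ℂ)⁻¹ • qShift (q : ℂ) (1, 0) (-AddMonoidHom.fst ℤ ℤ) (A : K →ₗ[ℂ] K) :=
  Finsupp.lhom_ext fun p x => by simp [zdOp, Prod.add_def, zpow_add₀ hq, mul_smul]

theorem KOp_eq_qShift :
    KOp q H =
      qShift (q : ℂ) 0 (AddMonoidHom.fst ℤ ℤ - AddMonoidHom.snd ℤ ℤ) (H : K →ₗ[ℂ] K) :=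
  Finsupp.lhom_ext fun p x => by simp [KOp]

theorem KinvOp_eq_qShift [Invertible H] :
    KinvOp q H =
      qShift (q : ℂ) 0 (-(AddMonoidHom.fst ℤ ℤ - AddMonoidHom.snd ℤ ℤ))
        ((⅟H : K →L[ℂ] K) : K →ₗ[ℂ] K) :=
  Finsupp.lhom_ext fun p x => by simp [KinvOp]

variable [Invertible A] [Invertible H]

theorem FOp_eq_smul_qShift_add :
    FOp q A B H =
      (√q : ℂ)⁻¹ • qShift (q : ℂ) (0, -1) (AddMonoidHom.fst ℤ ℤ)
        ((⅟A * B * ⅟H : K →L[ℂ] K) : K →ₗ[ℂ] K) +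
      ((√q : ℂ) * (1 - (q : ℂ) ^ 2)⁻¹) • qShift (q : ℂ) (1, 0) (AddMonoidHom.snd ℤ ℤ)
        ((⅟A * ⅟H : K →L[ℂ] K) : K →ₗ[ℂ] K) :=
  Finsupp.lhom_ext fun p x => by simp [FOp, Prod.add_def, sub_eq_add_neg, mul_smul]

theorem EOp_eq_smul_qShift_add :
    EOp q A B H =
      (√q : ℂ)⁻¹ • qShift (q : ℂ) (0, 1) (AddMonoidHom.fst ℤ ℤ)
        ((⅟A * B * ⅟H : K →L[ℂ] K) : K →ₗ[ℂ] K) +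
      ((√q : ℂ) * (1 - (q : ℂ) ^ 2)⁻¹) • qShift (q : ℂ) (-1, 0) (AddMonoidHom.snd ℤ ℤ)
        ((⅟A * ⅟H : K →L[ℂ] K) : K →ₗ[ℂ] K) :=
  Finsupp.lhom_ext fun p x => by simp [EOp, Prod.add_def, sub_eq_add_neg, mul_smul]

end Decomposition

section Adjoints

variable {q : ℝ} {A B H : K →L[ℂ] K}

theorem isFormalAdjoint_zOp (hq : (q : ℂ) ≠ 0) (hA : (A : K →ₗ[ℂ] K).IsSymmetric) :
    IsFormalAdjoint (zOp q A) (zdOp q A) := by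
  rw [zOp_eq_qShift, zdOp_eq_smul_qShift q A hq]
  simpa using isFormalAdjoint_qShift hq (-1, 0) (-AddMonoidHom.fst ℤ ℤ) hA

theorem isFormalAdjoint_KOp (hq : (q : ℂ) ≠ 0) (hH : (H : K →ₗ[ℂ] K).IsSymmetric) :
    IsFormalAdjoint (KOp q H) (KOp q H) := by
  rw [KOp_eq_qShift]
  simpa using
    isFormalAdjoint_qShift hq 0 (AddMonoidHom.fst ℤ ℤ - AddMonoidHom.snd ℤ ℤ) hH

theorem isSymmetric_invOf [Invertible A] (hA : (A : K →ₗ[ℂ] K).IsSymmetric) :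
    ((⅟A : K →L[ℂ] K) : K →ₗ[ℂ] K).IsSymmetric :=
  isSymmetric_of_mul_eq_one hA <| by
    rw [← ContinuousLinearMap.toLinearMap_mul, mul_invOf_self, ContinuousLinearMap.toLinearMap_one]

theorem isSymmetric_mul_of_commute (hA : (A : K →ₗ[ℂ] K).IsSymmetric)
    (hB : (B : K →ₗ[ℂ] K).IsSymmetric) (hAB : Commute A B) :
    ((A * B : K →L[ℂ] K) : K →ₗ[ℂ] K).IsSymmetric :=
  hA.mul_of_commute hB (commute_toLinearMap hAB)

theorem isFormalAdjoint_EOp [Invertible A] [Invertible H] (hq : (q : ℂ) ≠ 0)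
    (hA : (A : K →ₗ[ℂ] K).IsSymmetric) (hB : (B : K →ₗ[ℂ] K).IsSymmetric)
    (hH : (H : K →ₗ[ℂ] K).IsSymmetric) (hAB : Commute A B) (hAH : Commute A H)
    (hBH : Commute B H) : IsFormalAdjoint (EOp q A B H) (FOp q A B H) := by
  have hAinvHinv : Commute (⅟A) (⅟H) := hAH.invOf_left.invOf_right
  have hAinvBHinv_symm : ((⅟A * B * ⅟H : K →L[ℂ] K) : K →ₗ[ℂ] K).IsSymmetric :=
    isSymmetric_mul_of_commute
      (isSymmetric_mul_of_commute (isSymmetric_invOf hA) hB hAB.invOf_left)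
      (isSymmetric_invOf hH) (hAinvHinv.mul_left hBH.invOf_right)
  have hAinvHinv_symm : ((⅟A * ⅟H : K →L[ℂ] K) : K →ₗ[ℂ] K).IsSymmetric :=
    isSymmetric_mul_of_commute (isSymmetric_invOf hA) (isSymmetric_invOf hH) hAinvHinv
  have hfst := isFormalAdjoint_qShift hq (0, 1) (AddMonoidHom.fst ℤ ℤ) hAinvBHinv_symm
  have hsnd := isFormalAdjoint_qShift hq (-1, 0) (AddMonoidHom.snd ℤ ℤ) hAinvHinv_symm
  simp only [AddMonoidHom.coe_fst, AddMonoidHom.coe_snd, Prod.neg_mk, neg_neg, neg_zero, zpow_zero,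
    one_smul] at hfst hsnd
  have hsum := (hfst.real_smul (√q)⁻¹).add (hsnd.real_smul (√q * (1 - q ^ 2)⁻¹))
  push_cast at hsum
  rwa [EOp_eq_smul_qShift_add, FOp_eq_smul_qShift_add]

end Adjoints

section Relations

variable {q : ℝ} {A B H : K →L[ℂ] K}

theorem zdOp_qCommute_zOp (hq : (q : ℂ) ≠ 0) : QCommute ((q : ℂ) ^ 2) (zdOp q A) (zOp q A) := by
  rw [zOp_eq_qShift, zdOp_eq_smul_qShift q A hq]
  exact (qShift_qCommute hq (.refl _) rfl).smul_left _

theorem zOp_qCommute_KOp (hq : (q : ℂ) ≠ 0) (hAH : Commute A H) :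
    QCommute (q : ℂ) (zOp q A) (KOp q H) := by
  rw [zOp_eq_qShift, KOp_eq_qShift]
  exact qShift_qCommute hq (commute_toLinearMap hAH) (by simp)

theorem zdOp_qCommute_KOp (hq : (q : ℂ) ≠ 0) (hAH : Commute A H) :
    QCommute (q : ℂ)⁻¹ (zdOp q A) (KOp q H) := by
  rw [zdOp_eq_smul_qShift q A hq, KOp_eq_qShift]
  exact (qShift_qCommute hq (commute_toLinearMap hAH) (by simp)).smul_left _

variable [Invertible H]

theorem KOp_mul_KinvOp (hq : (q : ℂ) ≠ 0) : KOp q H * KinvOp q H = 1 := by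
  rw [KOp_eq_qShift, KinvOp_eq_qShift, qShift_mul hq, ← ContinuousLinearMap.toLinearMap_mul,
    mul_invOf_self, map_zero, zpow_zero, one_smul, add_zero, add_neg_cancel]
  exact qShift_zero_one _

theorem KinvOp_mul_KOp (hq : (q : ℂ) ≠ 0) : KinvOp q H * KOp q H = 1 := by
  rw [KOp_eq_qShift, KinvOp_eq_qShift, qShift_mul hq, ← ContinuousLinearMap.toLinearMap_mul,
    invOf_mul_self, map_zero, zpow_zero, one_smul, add_zero, neg_add_cancel]
  exact qShift_zero_one _

variable [Invertible A]

theorem KOp_qCommute_FOp (hq : (q : ℂ) ≠ 0) (hAH : Commute A H) (hBH : Commute B H) :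
    QCommute (q : ℂ) (KOp q H) (FOp q A B H) := by
  have hfst := commute_toLinearMap (commute_invOf_mul_mul_invOf hAH.symm hBH.symm (.refl H))
  have hsnd := commute_toLinearMap (commute_invOf_mul_invOf hAH.symm (.refl H))
  rw [KOp_eq_qShift, FOp_eq_smul_qShift_add]
  exact ((qShift_qCommute hq hfst (by simp)).smul_right _).add_right
    ((qShift_qCommute hq hsnd (by simp)).smul_right _)

theorem KOp_qCommute_EOp (hq : (q : ℂ) ≠ 0) (hAH : Commute A H) (hBH : Commute B H) :
    QCommute (q : ℂ)⁻¹ (KOp q H) (EOp q A B H) := by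
  have hfst := commute_toLinearMap (commute_invOf_mul_mul_invOf hAH.symm hBH.symm (.refl H))
  have hsnd := commute_toLinearMap (commute_invOf_mul_invOf hAH.symm (.refl H))
  rw [KOp_eq_qShift, EOp_eq_smul_qShift_add]
  exact ((qShift_qCommute hq hfst (by simp)).smul_right _).add_right
    ((qShift_qCommute hq hsnd (by simp)).smul_right _)

theorem EOp_commute_FOp (hq : (q : ℂ) ≠ 0) (hAB : Commute A B) (hAH : Commute A H)
    (hBH : Commute B H) : Commute (EOp q A B H) (FOp q A B H) := by
  have hA : Commute (⅟A * B * ⅟H) A := (commute_invOf_mul_mul_invOf (.refl A) hAB hAH).symm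
  have hH : Commute (⅟A * B * ⅟H) H :=
    (commute_invOf_mul_mul_invOf hAH.symm hBH.symm (.refl H)).symm
  have hmixed := commute_toLinearMap (commute_invOf_mul_invOf hA hH)
  have hfst_fst := qShift_commute hq (v := (0, 1)) (w := (0, -1)) (f := .fst ℤ ℤ) (g := .fst ℤ ℤ)
    (.refl ((⅟A * B * ⅟H : K →L[ℂ] K) : K →ₗ[ℂ] K)) (by simp)
  have hfst_snd := qShift_commute hq (v := (0, 1)) (w := (1, 0)) (f := .fst ℤ ℤ) (g := .snd ℤ ℤ)
    hmixed (by simp)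
  have hsnd_fst := qShift_commute hq (v := (-1, 0)) (w := (0, -1)) (f := .snd ℤ ℤ)
    (g := .fst ℤ ℤ) hmixed.symm (by simp)
  have hsnd_snd := qShift_commute hq (v := (-1, 0)) (w := (1, 0)) (f := .snd ℤ ℤ) (g := .snd ℤ ℤ)
    (.refl ((⅟A * ⅟H : K →L[ℂ] K) : K →ₗ[ℂ] K)) (by simp)
  rw [EOp_eq_smul_qShift_add, FOp_eq_smul_qShift_add]
  exact (((hfst_fst.smul_right _).add_right (hfst_snd.smul_right _)).smul_left _).add_left
    (((hsnd_fst.smul_right _).add_right (hsnd_snd.smul_right _)).smul_left _)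

theorem zOp_qCommute_EOp (hq : (q : ℂ) ≠ 0) (hAB : Commute A B) (hAH : Commute A H) :
    QCommute (q : ℂ) (zOp q A) (EOp q A B H) := by
  have hfst := commute_toLinearMap (commute_invOf_mul_mul_invOf (.refl A) hAB hAH)
  have hsnd := commute_toLinearMap (commute_invOf_mul_invOf (.refl A) hAH)
  rw [zOp_eq_qShift, EOp_eq_smul_qShift_add]
  exact ((qShift_qCommute hq hfst (by simp)).smul_right _).add_right
    ((qShift_qCommute hq hsnd (by simp)).smul_right _)

theorem zdOp_qCommute_FOp (hq : (q : ℂ) ≠ 0) (hAB : Commute A B) (hAH : Commute A H) :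
    QCommute (q : ℂ)⁻¹ (zdOp q A) (FOp q A B H) := by
  have hfst := commute_toLinearMap (commute_invOf_mul_mul_invOf (.refl A) hAB hAH)
  have hsnd := commute_toLinearMap (commute_invOf_mul_invOf (.refl A) hAH)
  rw [zdOp_eq_smul_qShift q A hq, FOp_eq_smul_qShift_add]
  exact (((qShift_qCommute hq hfst (by simp)).smul_right _).add_right
    ((qShift_qCommute hq hsnd (by simp)).smul_right _)).smul_left _

theorem qShift_neg_fst_mul_qShift_snd (hq : (q : ℂ) ≠ 0) {v w : ℤ × ℤ} (hwv : w + v = 0) :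
    qShift (q : ℂ) v (-AddMonoidHom.fst ℤ ℤ) (A : K →ₗ[ℂ] K) *
        qShift (q : ℂ) w (AddMonoidHom.snd ℤ ℤ) ((⅟A * ⅟H : K →L[ℂ] K) : K →ₗ[ℂ] K) =
      (q : ℂ) ^ (-w.1) • KinvOp q H := by
  rw [qShift_mul hq, hwv, ← ContinuousLinearMap.toLinearMap_mul, mul_invOf_cancel_left,
    KinvOp_eq_qShift, neg_sub', sub_neg_eq_add]
  rfl

theorem qShift_snd_mul_qShift_neg_fst (hq : (q : ℂ) ≠ 0) (hAH : Commute A H) {v w : ℤ × ℤ}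
    (hwv : w + v = 0) :
    qShift (q : ℂ) w (AddMonoidHom.snd ℤ ℤ) ((⅟A * ⅟H : K →L[ℂ] K) : K →ₗ[ℂ] K) *
        qShift (q : ℂ) v (-AddMonoidHom.fst ℤ ℤ) (A : K →ₗ[ℂ] K) =
      (q : ℂ) ^ v.2 • KinvOp q H := by
  rw [qShift_mul hq, add_comm v w, hwv, ← ContinuousLinearMap.toLinearMap_mul,
    ← (commute_invOf_mul_invOf (.refl A) hAH).eq, mul_invOf_cancel_left, KinvOp_eq_qShift, neg_sub',
    sub_neg_eq_add, add_comm (AddMonoidHom.snd ℤ ℤ)]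
  rfl

theorem sqrt_mul_inv_one_sub_sq (hq0 : 0 < q) (hq1 : q ≠ 1) :
    (√q : ℂ) * (1 - (q : ℂ) ^ 2)⁻¹ = (q : ℂ) ^ 2 * ((√q : ℂ) * (1 - (q : ℂ) ^ 2)⁻¹) + √q := by
  have hsq : q ^ 2 ≠ 1 := (pow_eq_one_iff_of_nonneg hq0.le two_ne_zero).not.mpr hq1
  have hsub : (1 : ℂ) - (q : ℂ) ^ 2 ≠ 0 := sub_ne_zero.mpr (by exact_mod_cast hsq.symm)
  field_simp
  ring

theorem zOp_mul_FOp (hq0 : 0 < q) (hq1 : q ≠ 1) (hAB : Commute A B) (hAH : Commute A H) :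
    zOp q A * FOp q A B H =
      (q : ℂ) • (FOp q A B H * zOp q A) + (√q : ℂ)⁻¹ • KinvOp q H := by
  have hq : (q : ℂ) ≠ 0 := Complex.ofReal_ne_zero.mpr hq0.ne'
  have hsqrt : (√q : ℂ) ≠ 0 := Complex.ofReal_ne_zero.mpr (Real.sqrt_pos.mpr hq0).ne'
  have hsqrt_sq : (√q : ℂ) ^ 2 = q := by exact_mod_cast Real.sq_sqrt hq0.le
  have hfst := commute_toLinearMap (commute_invOf_mul_mul_invOf (.refl A) hAB hAH)
  rw [zOp_eq_qShift, FOp_eq_smul_qShift_add]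
  refine (qShift_qCommute hq hfst (by simp)).mul_smul_add_smul
    (qShift_neg_fst_mul_qShift_snd hq rfl) (qShift_snd_mul_qShift_neg_fst hq hAH rfl) ?_
  have hscalar := sqrt_mul_inv_one_sub_sq hq0 hq1
  generalize (√q : ℂ) * (1 - (q : ℂ) ^ 2)⁻¹ = γ at *
  rw [zpow_neg_one, zpow_zero]
  field_simp
  linear_combination √q * hscalar + hsqrt_sq

theorem zdOp_mul_EOp (hq0 : 0 < q) (hq1 : q ≠ 1) (hAB : Commute A B) (hAH : Commute A H) :
    zdOp q A * EOp q A B H =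
      (q : ℂ)⁻¹ • (EOp q A B H * zdOp q A) - (√q : ℂ)⁻¹ ^ 3 • KinvOp q H := by
  have hq : (q : ℂ) ≠ 0 := Complex.ofReal_ne_zero.mpr hq0.ne'
  have hsqrt : (√q : ℂ) ≠ 0 := Complex.ofReal_ne_zero.mpr (Real.sqrt_pos.mpr hq0).ne'
  have hsqrt_sq : (√q : ℂ) ^ 2 = q := by exact_mod_cast Real.sq_sqrt hq0.le
  have hfst := commute_toLinearMap (commute_invOf_mul_mul_invOf (.refl A) hAB hAH)
  rw [sub_eq_add_neg, ← neg_smul ((√q : ℂ)⁻¹ ^ 3) (KinvOp q H),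
    zdOp_eq_smul_qShift q A hq, EOp_eq_smul_qShift_add]
  refine ((qShift_qCommute hq hfst (by simp)).smul_left _).mul_smul_add_smul
    (l := (q : ℂ)⁻¹ * (q : ℂ) ^ (1 : ℤ)) (r := (q : ℂ)⁻¹ * (q : ℂ) ^ (0 : ℤ)) ?_ ?_ ?_
  · rw [smul_mul_assoc, qShift_neg_fst_mul_qShift_snd hq rfl, smul_smul]
    rfl
  · rw [mul_smul_comm, qShift_snd_mul_qShift_neg_fst hq hAH rfl, smul_smul]
  · have hscalar := sqrt_mul_inv_one_sub_sq hq0 hq1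
    generalize (√q : ℂ) * (1 - (q : ℂ) ^ 2)⁻¹ = γ at *
    rw [zpow_one, zpow_zero]
    field_simp
    linear_combination -√q ^ 3 * hscalar - (√q ^ 2 + q) * hsqrt_sq

end Relations

end Operators

end Stmt8

open Stmt8 in
theorem stmt_8_general {K : Type*} [NormedAddCommGroup K] [InnerProductSpace ℂ K]
    (q : ℝ) (hq0 : 0 < q) (hq1 : q ≠ 1)
    (A B H : K →L[ℂ] K) [Invertible A] [Invertible H]
    (hA : (A : K →ₗ[ℂ] K).IsSymmetric) (hB : (B : K →ₗ[ℂ] K).IsSymmetric)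
    (hH : (H : K →ₗ[ℂ] K).IsSymmetric)
    (hAB : Commute A B) (hAH : Commute A H) (hBH : Commute B H) :
    (∀ ξ η : ℤ × ℤ →₀ K, finsuppInner (zOp q A ξ) η = finsuppInner ξ (zdOp q A η)) ∧
    (∀ ξ η : ℤ × ℤ →₀ K,
      finsuppInner (EOp q A B H ξ) η = finsuppInner ξ (FOp q A B H η)) ∧
    (∀ ξ η : ℤ × ℤ →₀ K, finsuppInner (KOp q H ξ) η = finsuppInner ξ (KOp q H η)) ∧
    zdOp q A * zOp q A = (q : ℂ) ^ 2 • (zOp q A * zdOp q A) ∧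
    KOp q H * KinvOp q H = 1 ∧ KinvOp q H * KOp q H = 1 ∧
    KOp q H * FOp q A B H = (q : ℂ) • (FOp q A B H * KOp q H) ∧
    KOp q H * EOp q A B H = (q : ℂ)⁻¹ • (EOp q A B H * KOp q H) ∧
    EOp q A B H * FOp q A B H = FOp q A B H * EOp q A B H ∧
    zOp q A * KOp q H = (q : ℂ) • (KOp q H * zOp q A) ∧
    zOp q A * EOp q A B H = (q : ℂ) • (EOp q A B H * zOp q A) ∧
    zOp q A * FOp q A B H
      = (q : ℂ) • (FOp q A B H * zOp q A) + (Real.sqrt q : ℂ)⁻¹ • KinvOp q H ∧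
    zdOp q A * KOp q H = (q : ℂ)⁻¹ • (KOp q H * zdOp q A) ∧
    zdOp q A * EOp q A B H
      = (q : ℂ)⁻¹ • (EOp q A B H * zdOp q A) - ((Real.sqrt q : ℂ)⁻¹) ^ 3 • KinvOp q H ∧
    zdOp q A * FOp q A B H = (q : ℂ)⁻¹ • (FOp q A B H * zdOp q A) :=
  have hq : (q : ℂ) ≠ 0 := Complex.ofReal_ne_zero.mpr hq0.ne'
  ⟨isFormalAdjoint_zOp hq hA, isFormalAdjoint_EOp hq hA hB hH hAB hAH hBH,
    isFormalAdjoint_KOp hq hH, zdOp_qCommute_zOp hq, KOp_mul_KinvOp hq, KinvOp_mul_KOp hq,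
    KOp_qCommute_FOp hq hAH hBH, KOp_qCommute_EOp hq hAH hBH, EOp_commute_FOp hq hAB hAH hBH,
    zOp_qCommute_KOp hq hAH, zOp_qCommute_EOp hq hAB hAH, zOp_mul_FOp hq0 hq1 hAB hAH,
    zdOp_qCommute_KOp hq hAH, zdOp_mul_EOp hq0 hq1 hAB hAH, zdOp_qCommute_FOp hq hAB hAH⟩

open Stmt8 in
/-- With `0 < q < 1` and `A, B, H` pairwise commuting bounded self-adjoint
operators on a Hilbert space `K`, `A` and `H` invertible, the operators
`z, z†, E, F, K̂, K̂⁻¹` defined above on the space of finitely supported functions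
`ℤ² →₀ K` form a ∗-representation of the cross product ∗-algebra `U_q(e₂) ⋉ O(C_q)`. -/
theorem stmt_8 {K : Type*} [NormedAddCommGroup K] [InnerProductSpace ℂ K]
    [CompleteSpace K]
    (q : ℝ) (hq0 : 0 < q) (hq1 : q < 1)
    (A B H : K →L[ℂ] K) [Invertible A] [Invertible H]
    (hA : IsSelfAdjoint A) (hB : IsSelfAdjoint B) (hH : IsSelfAdjoint H)
    (hAB : A * B = B * A) (hAH : A * H = H * A) (hBH : B * H = H * B) :
    (∀ ξ η : ℤ × ℤ →₀ K, finsuppInner (zOp q A ξ) η = finsuppInner ξ (zdOp q A η)) ∧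
    (∀ ξ η : ℤ × ℤ →₀ K,
      finsuppInner (EOp q A B H ξ) η = finsuppInner ξ (FOp q A B H η)) ∧
    (∀ ξ η : ℤ × ℤ →₀ K, finsuppInner (KOp q H ξ) η = finsuppInner ξ (KOp q H η)) ∧
    zdOp q A * zOp q A = (q : ℂ) ^ 2 • (zOp q A * zdOp q A) ∧
    KOp q H * KinvOp q H = 1 ∧ KinvOp q H * KOp q H = 1 ∧
    KOp q H * FOp q A B H = (q : ℂ) • (FOp q A B H * KOp q H) ∧
    KOp q H * EOp q A B H = (q : ℂ)⁻¹ • (EOp q A B H * KOp q H) ∧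
    EOp q A B H * FOp q A B H = FOp q A B H * EOp q A B H ∧
    zOp q A * KOp q H = (q : ℂ) • (KOp q H * zOp q A) ∧
    zOp q A * EOp q A B H = (q : ℂ) • (EOp q A B H * zOp q A) ∧
    zOp q A * FOp q A B H
      = (q : ℂ) • (FOp q A B H * zOp q A) + (Real.sqrt q : ℂ)⁻¹ • KinvOp q H ∧
    zdOp q A * KOp q H = (q : ℂ)⁻¹ • (KOp q H * zdOp q A) ∧
    zdOp q A * EOp q A B H
      = (q : ℂ)⁻¹ • (EOp q A B H * zdOp q A) - ((Real.sqrt q : ℂ)⁻¹) ^ 3 • KinvOp q H ∧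
    zdOp q A * FOp q A B H = (q : ℂ)⁻¹ • (FOp q A B H * zdOp q A) :=
  stmt_8_general q hq0 hq1.ne A B H hA.isSymmetric hB.isSymmetric hH.isSymmetric hAB hAH hBH

end
end

section
/- The maps v, v†, n, n†, E, F, K̂, K̂⁻¹ form a ∗-representation of the left cross product ∗-algebra U_q(e₂)⋉O(E_q(2)) on D: ⟨vξ, η⟩ = ⟨ξ, v†η⟩, ⟨nξ, η⟩ = ⟨ξ, n†η⟩, ⟨Eξ, η⟩ = ⟨ξ, Fη⟩, ⟨K̂ξ, η⟩ = ⟨ξ, K̂η⟩ for all ξ, η ∈ D, and on D all the defining relations of U_q(e₂)⋉O(E_q(2)) hold: v†v = vv† = id, nn† = n†n, nv = qvn; K̂K̂⁻¹ = K̂⁻¹K̂ = id, K̂F = qFK̂, K̂E = q⁻¹EK̂, EF = FE; vF = q^{1/2}Fv, vE = q^{1/2}Ev, vK̂ = q^{1/2}K̂v, v†F = q^{−1/2}Fv†, v†E = q^{−1/2}Ev†, v†K̂ = q^{−1/2}K̂v†, nF = q^{1/2}Fn + K̂⁻¹v†, nE = q^{1/2}En, nK̂ = q^{1/2}K̂n,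 n†F = q^{−1/2}Fn†, n†E = q^{−1/2}En† − q⁻¹K̂⁻¹v, n†K̂ = q^{−1/2}K̂n†. -/
noncomputable section

namespace Stmt9

variable {K : Type*} [NormedAddCommGroup K] [InnerProductSpace ℂ K] [CompleteSpace K]

/-- `v η_{mk} = η_{m-1,k-1}`. -/
def vOp : Module.End ℂ (ℤ × ℤ →₀ K) :=
  Finsupp.lsum ℂ fun p => Finsupp.lsingle (p.1 - 1, p.2 - 1)

/-- `v† η_{mk} = η_{m+1,k+1}`. -/
def vdOp : Module.End ℂ (ℤ × ℤ →₀ K) :=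
  Finsupp.lsum ℂ fun p => Finsupp.lsingle (p.1 + 1, p.2 + 1)

/-- `n η_{mk} = q^{-m} A η_{m,k+1}`. -/
def nOp (q : ℝ) (A : K →L[ℂ] K) : Module.End ℂ (ℤ × ℤ →₀ K) :=
  Finsupp.lsum ℂ fun p => (Finsupp.lsingle (p.1, p.2 + 1)).comp
    (((q : ℂ) ^ (-p.1)) • (A : K →ₗ[ℂ] K))

/-- `n† η_{mk} = q^{-m} A η_{m,k-1}`. -/
def ndOp (q : ℝ) (A : K →L[ℂ] K) : Module.End ℂ (ℤ × ℤ →₀ K) :=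
  Finsupp.lsum ℂ fun p => (Finsupp.lsingle (p.1, p.2 - 1)).comp
    (((q : ℂ) ^ (-p.1)) • (A : K →ₗ[ℂ] K))

/-- `F η_{mk} = (1-q²)⁻¹ q^{(k+1)/2} ε A⁻¹H⁻¹ η_{m+1,k}`. -/
def FOp (q ε : ℝ) (A H : K →L[ℂ] K) [Invertible A] [Invertible H] :
    Module.End ℂ (ℤ × ℤ →₀ K) :=
  Finsupp.lsum ℂ fun p => (Finsupp.lsingle (p.1 + 1, p.2)).comp
    (((1 - (q : ℂ) ^ 2)⁻¹ * (Real.sqrt q : ℂ) ^ (p.2 + 1) * (ε : ℂ)) •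
      ((⅟A * ⅟H : K →L[ℂ] K) : K →ₗ[ℂ] K))

/-- `E η_{mk} = (1-q²)⁻¹ q^{(k+1)/2} ε A⁻¹H⁻¹ η_{m-1,k}`. -/
def EOp (q ε : ℝ) (A H : K →L[ℂ] K) [Invertible A] [Invertible H] :
    Module.End ℂ (ℤ × ℤ →₀ K) :=
  Finsupp.lsum ℂ fun p => (Finsupp.lsingle (p.1 - 1, p.2)).comp
    (((1 - (q : ℂ) ^ 2)⁻¹ * (Real.sqrt q : ℂ) ^ (p.2 + 1) * (ε : ℂ)) •
      ((⅟A * ⅟H : K →L[ℂ] K) : K →ₗ[ℂ] K))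

/-- `K̂ η_{mk} = q^{m-k/2} ε H η_{mk}`. -/
def KOp (q ε : ℝ) (H : K →L[ℂ] K) : Module.End ℂ (ℤ × ℤ →₀ K) :=
  Finsupp.lsum ℂ fun p => (Finsupp.lsingle p).comp
    (((Real.sqrt q : ℂ) ^ (2 * p.1 - p.2) * (ε : ℂ)) • (H : K →ₗ[ℂ] K))

/-- `K̂⁻¹ η_{mk} = q^{-m+k/2} ε H⁻¹ η_{mk}`. -/
def KinvOp (q ε : ℝ) (H : K →L[ℂ] K) [Invertible H] : Module.End ℂ (ℤ × ℤ →₀ K) :=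
  Finsupp.lsum ℂ fun p => (Finsupp.lsingle p).comp
    (((Real.sqrt q : ℂ) ^ (-(2 * p.1 - p.2)) * (ε : ℂ)) •
      ((⅟H : K →L[ℂ] K) : K →ₗ[ℂ] K))

end Stmt9

/-!
All eight operators are shifts `η_p ↦ s ^ ℓ(p) T η_{p+d}` with `s = q^{1/2}`, `ℓ : ℤ² → ℤ` additive
and `T` an operator on `K`. Two such shifts with commuting `T, T'` satisfy
`S S' = s ^ (ℓ(d') - ℓ'(d)) S' S`, which gives all the commutation relations except the two with
three terms. Those compare shifts with the same `ℓ` and `d`, and reduce to the identity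
`(q⁻¹ - q) A T = s⁻¹ ε H⁻¹` for the operator `T = (1 - q²)⁻¹ s ε A⁻¹H⁻¹` in `E` and `F`. If
`ℓ(d) = 0`, the adjoint of a shift is the shift by `-d` with the same `ℓ` and the adjoint of `T`.
-/

namespace Stmt9

section WeightedShift

variable {𝕜 ι M : Type*} [Field 𝕜] [AddCommMonoid ι] [AddCommMonoid M] [Module 𝕜 M]

/-- The weighted shift `η_p ↦ s ^ ℓ(p) T η_{p+d}` on finitely supported functions, where `η_p` is
the function supported at `p` with value `η`. Every generator of the algebra acts as such a shift.
Restricting to exponents `ℓ` additive in `p` makes these maps closed under composition up to powers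
of `s`. -/
def weightedShift (s : 𝕜) (ℓ : ι →+ ℤ) (d : ι) (T : Module.End 𝕜 M) : Module.End 𝕜 (ι →₀ M) :=
  Finsupp.lsum 𝕜 fun p => (Finsupp.lsingle (p + d)).comp (s ^ ℓ p • T)

variable (s : 𝕜) (ℓ ℓ' : ι →+ ℤ) (d d' : ι) (T T' : Module.End 𝕜 M)

theorem weightedShift_single (p : ι) (x : M) :
    weightedShift s ℓ d T (Finsupp.single p x) = Finsupp.single (p + d) (s ^ ℓ p • T x) := by
  simp [weightedShift]

theorem weightedShift_zero_zero_one : weightedShift s (0 : ι →+ ℤ) 0 (1 : Module.End 𝕜 M) = 1 := by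
  ext
  simp [weightedShift]

theorem weightedShift_smul (c : 𝕜) :
    weightedShift s ℓ d (c • T) = c • weightedShift s ℓ d T :=
  Finsupp.lhom_ext fun p x => by simp [weightedShift_single, smul_comm c]

theorem weightedShift_add :
    weightedShift s ℓ d (T + T') = weightedShift s ℓ d T + weightedShift s ℓ d T' :=
  Finsupp.lhom_ext fun p x => by simp [weightedShift_single]

variable {s ℓ ℓ' d d' T T'}

theorem weightedShift_mul (hs : s ≠ 0) :
    weightedShift s ℓ d T * weightedShift s ℓ' d' T' =
      s ^ ℓ d' • weightedShift s (ℓ + ℓ') (d + d') (T * T') :=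
  Finsupp.lhom_ext fun p x => by
    have hexp : s ^ ℓ (p + d') * s ^ ℓ' p = s ^ ℓ d' * s ^ (ℓ + ℓ') p := by
      rw [← zpow_add₀ hs, ← zpow_add₀ hs, map_add, AddMonoidHom.add_apply, add_right_comm, add_comm]
    simp only [Module.End.mul_apply, LinearMap.smul_apply, weightedShift_single, map_smul,
      smul_smul, Finsupp.smul_single, hexp, add_assoc, add_comm d']

theorem weightedShift_mul_eq_smul_mul (hs : s ≠ 0) (hT : Commute T T') :
    weightedShift s ℓ d T * weightedShift s ℓ' d' T' =
      s ^ (ℓ d' - ℓ' d) • (weightedShift s ℓ' d' T' * weightedShift s ℓ d T) := by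
  rw [weightedShift_mul hs, weightedShift_mul hs, smul_smul,
    ← zpow_add₀ hs, sub_add_cancel, add_comm ℓ', add_comm d', hT.eq]

end WeightedShift

theorem weightedShift_apply {𝕜 ι M : Type*} [Field 𝕜] [AddCommGroup ι] [AddCommMonoid M]
    [Module 𝕜 M] (s : 𝕜) (ℓ : ι →+ ℤ) (d : ι) (T : Module.End 𝕜 M) (η : ι →₀ M) (p : ι) :
    weightedShift s ℓ d T η p = s ^ ℓ (p - d) • T (η (p - d)) := by
  classical
  induction η using Finsupp.induction_linear with
  | zero => simp
  | add η ζ hη hζ => simp only [map_add, Finsupp.add_apply, hη, hζ, smul_add]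
  | single i x =>
    rw [weightedShift_single, Finsupp.single_apply, Finsupp.single_apply]
    by_cases h : i + d = p
    · simp [← h]
    · simp [h, eq_sub_iff_add_eq]

section Adjoint

variable {ι K : Type*} [NormedAddCommGroup K] [InnerProductSpace ℂ K]

theorem finsuppInner_single_left (i : ι) (x : K) (ζ : ι →₀ K) :
    finsuppInner (Finsupp.single i x) ζ = inner ℂ x (ζ i) :=
  Finsupp.sum_single_index (inner_zero_left _)

theorem finsuppInner_add_left (ξ ξ' ζ : ι →₀ K) :
    finsuppInner (ξ + ξ') ζ = finsuppInner ξ ζ + finsuppInner ξ' ζ := by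
  classical
  exact Finsupp.sum_add_index' (fun _ => inner_zero_left _) fun _ _ _ => inner_add_left _ _ _

theorem finsuppInner_weightedShift_left [AddCommGroup ι] (s : ℝ) {ℓ : ι →+ ℤ} {d : ι}
    (hd : ℓ d = 0) {T T' : Module.End ℂ K} (hT : ∀ x y, inner ℂ (T x) y = inner ℂ x (T' y))
    (ξ η : ι →₀ K) :
    finsuppInner (weightedShift (s : ℂ) ℓ d T ξ) η =
      finsuppInner ξ (weightedShift (s : ℂ) ℓ (-d) T' η) := by
  induction ξ using Finsupp.induction_linear with
  | zero => simp [finsuppInner]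
  | add ξ ξ' hξ hξ' => rw [map_add, finsuppInner_add_left, finsuppInner_add_left, hξ, hξ']
  | single i x =>
    rw [weightedShift_single, finsuppInner_single_left, finsuppInner_single_left,
      weightedShift_apply, inner_smul_left, inner_smul_right, hT, sub_neg_eq_add, map_add ℓ, hd,
      add_zero, map_zpow₀, Complex.conj_ofReal]

end Adjoint

theorem isSymmetric_invOf {𝕜 E : Type*} [RCLike 𝕜] [SeminormedAddCommGroup E]
    [InnerProductSpace 𝕜 E] {T : E →L[𝕜] E} [Invertible T] (hT : (T : E →ₗ[𝕜] E).IsSymmetric) :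
    ((⅟T : E →L[𝕜] E) : E →ₗ[𝕜] E).IsSymmetric := by
  have apply_invOf (x : E) : T ((⅟T : E →L[𝕜] E) x) = x :=
    DFunLike.congr_fun (mul_invOf_self T) x
  intro x y
  simpa [apply_invOf] using (hT ((⅟T : E →L[𝕜] E) x) ((⅟T : E →L[𝕜] E) y)).symm

theorem commute_toLinearMap {R M : Type*} [Semiring R] [AddCommMonoid M] [TopologicalSpace M]
    [ContinuousAdd M] [Module R M] {S T : M →L[R] M} (h : Commute S T) :
    Commute (S : M →ₗ[R] M) (T : M →ₗ[R] M) :=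
  h.map ContinuousLinearMap.toLinearMapRingHom

theorem ofReal_sqrt_ne_zero {q : ℝ} (hq : 0 < q) : (√q : ℂ) ≠ 0 :=
  Complex.ofReal_ne_zero.2 (Real.sqrt_pos.2 hq).ne'

theorem ofReal_sqrt_sq {q : ℝ} (hq : 0 ≤ q) : (√q : ℂ) ^ 2 = q := by
  exact_mod_cast Real.sq_sqrt hq

section Operators

variable {K : Type*} [NormedAddCommGroup K] [InnerProductSpace ℂ K]

/-- The operator `(1 - q²)⁻¹ q^{1/2} ε A⁻¹H⁻¹` on `K` by which both `E` and `F` act on the values,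
up to the power `q^{k/2}` that depends on the position. -/
def ladderCoeff (q ε : ℝ) (A H : K →L[ℂ] K) [Invertible A] [Invertible H] : K →L[ℂ] K :=
  ((1 - (q : ℂ) ^ 2)⁻¹ * (√q : ℂ) * (ε : ℂ)) • (⅟A * ⅟H)

variable {q ε : ℝ} {A H : K →L[ℂ] K} [Invertible A] [Invertible H]

theorem commute_left_ladderCoeff (hAH : Commute A H) :
    Commute (A : K →ₗ[ℂ] K) (ladderCoeff q ε A H : K →ₗ[ℂ] K) :=
  commute_toLinearMap (((commute_invOf A).mul_right hAH.invOf_right).smul_right _)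

theorem commute_right_ladderCoeff (hAH : Commute A H) :
    Commute (H : K →ₗ[ℂ] K) (ladderCoeff q ε A H : K →ₗ[ℂ] K) :=
  commute_toLinearMap ((hAH.symm.invOf_right.mul_right (commute_invOf H)).smul_right _)

theorem isSymmetric_ladderCoeff (hA : (A : K →ₗ[ℂ] K).IsSymmetric)
    (hH : (H : K →ₗ[ℂ] K).IsSymmetric) (hAH : Commute A H) :
    (ladderCoeff q ε A H : K →ₗ[ℂ] K).IsSymmetric :=
  .smul (by simp) <| (isSymmetric_invOf hA).mul_of_commute (isSymmetric_invOf hH) <|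
    commute_toLinearMap hAH.invOf_left.invOf_right

theorem inv_smul_mul_ladderCoeff (hq : 0 < q) (hq1 : q ≠ 1) :
    (q : ℂ)⁻¹ • ((A : K →ₗ[ℂ] K) * (ladderCoeff q ε A H : K →ₗ[ℂ] K)) =
      (q : ℂ) • ((A : K →ₗ[ℂ] K) * (ladderCoeff q ε A H : K →ₗ[ℂ] K)) +
        (√q : ℂ)⁻¹ • (ε : ℂ) • ((⅟H : K →L[ℂ] K) : K →ₗ[ℂ] K) := by
  have hs := ofReal_sqrt_ne_zero hq
  have hq0 : (q : ℂ) ≠ 0 := Complex.ofReal_ne_zero.2 hq.ne'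
  have hden : 1 - (q : ℂ) ^ 2 ≠ 0 := by
    have : q ^ 2 ≠ 1 := (pow_eq_one_iff_of_nonneg hq.le two_ne_zero).not.2 hq1
    exact sub_ne_zero.2 (by exact_mod_cast this.symm)
  have hscalar : ((q : ℂ)⁻¹ - q) * ((1 - (q : ℂ) ^ 2)⁻¹ * √q * ε) = (√q : ℂ)⁻¹ * ε := by
    field_simp
    rw [ofReal_sqrt_sq hq.le]
  have hmul : (A : K →ₗ[ℂ] K) * (ladderCoeff q ε A H : K →ₗ[ℂ] K) =
      ((1 - (q : ℂ) ^ 2)⁻¹ * (√q : ℂ) * (ε : ℂ)) • ((⅟H : K →L[ℂ] K) : K →ₗ[ℂ] K) := by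
    rw [← ContinuousLinearMap.toLinearMap_mul, ladderCoeff, mul_smul_comm, mul_invOf_cancel_left,
      ContinuousLinearMap.toLinearMap_smul]
  rw [← sub_eq_iff_eq_add', ← sub_smul, hmul, smul_smul, hscalar, smul_smul]

theorem vOp_eq_weightedShift (s : ℂ) : (vOp : Module.End ℂ (ℤ × ℤ →₀ K)) =
    weightedShift s 0 (-1, -1) 1 :=
  Finsupp.lhom_ext fun p x => by simp [vOp, weightedShift_single, sub_eq_add_neg, Prod.add_def]

theorem vdOp_eq_weightedShift (s : ℂ) : (vdOp : Module.End ℂ (ℤ × ℤ →₀ K)) =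
    weightedShift s 0 (1, 1) 1 :=
  Finsupp.lhom_ext fun p x => by simp [vdOp, weightedShift_single, Prod.add_def]

theorem ofReal_zpow_neg_eq_sqrt_zpow (hq : 0 ≤ q) (m : ℤ) :
    (q : ℂ) ^ (-m) = (√q : ℂ) ^ (-(2 * m)) := by
  rw [← mul_neg, zpow_mul, zpow_ofNat, ofReal_sqrt_sq hq]

theorem nOp_eq_weightedShift (hq : 0 ≤ q) (A : K →L[ℂ] K) :
    nOp q A = weightedShift (√q : ℂ) (-(2 • .fst ℤ ℤ)) (0, 1) (A : K →ₗ[ℂ] K) :=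
  Finsupp.lhom_ext fun p x => by
    simp [nOp, weightedShift_single, ofReal_zpow_neg_eq_sqrt_zpow hq, Prod.add_def]

theorem ndOp_eq_weightedShift (hq : 0 ≤ q) (A : K →L[ℂ] K) :
    ndOp q A = weightedShift (√q : ℂ) (-(2 • .fst ℤ ℤ)) (0, -1) (A : K →ₗ[ℂ] K) :=
  Finsupp.lhom_ext fun p x => by
    simp [ndOp, weightedShift_single, ofReal_zpow_neg_eq_sqrt_zpow hq, Prod.add_def,
      sub_eq_add_neg]

theorem FOp_eq_weightedShift (hq : 0 < q) :
    FOp q ε A H =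
      weightedShift (√q : ℂ) (.snd ℤ ℤ) (1, 0) (ladderCoeff q ε A H : K →ₗ[ℂ] K) :=
  Finsupp.lhom_ext fun p x => by
    simp [FOp, weightedShift_single, ladderCoeff, smul_smul, Prod.add_def,
      zpow_add_one₀ (ofReal_sqrt_ne_zero hq), mul_comm, mul_assoc]

theorem EOp_eq_weightedShift (hq : 0 < q) :
    EOp q ε A H =
      weightedShift (√q : ℂ) (.snd ℤ ℤ) (-1, 0) (ladderCoeff q ε A H : K →ₗ[ℂ] K) :=
  Finsupp.lhom_ext fun p x => by
    simp [EOp, weightedShift_single, ladderCoeff, smul_smul, Prod.add_def, sub_eq_add_neg,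
      zpow_add_one₀ (ofReal_sqrt_ne_zero hq), mul_comm, mul_assoc]

theorem KOp_eq_weightedShift (q ε : ℝ) (H : K →L[ℂ] K) :
    KOp q ε H =
      weightedShift (√q : ℂ) (2 • .fst ℤ ℤ - .snd ℤ ℤ) 0 ((ε : ℂ) • (H : K →ₗ[ℂ] K)) :=
  Finsupp.lhom_ext fun p x => by simp [KOp, weightedShift_single, mul_smul]

theorem KinvOp_eq_weightedShift (q ε : ℝ) (H : K →L[ℂ] K) [Invertible H] :
    KinvOp q ε H = weightedShift (√q : ℂ) (-(2 • .fst ℤ ℤ) + .snd ℤ ℤ) 0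
      ((ε : ℂ) • ((⅟H : K →L[ℂ] K) : K →ₗ[ℂ] K)) :=
  Finsupp.lhom_ext fun p x => by
    simp [KinvOp, weightedShift_single, mul_smul, sub_eq_neg_add]

theorem finsuppInner_vOp_left (ξ η : ℤ × ℤ →₀ K) :
    finsuppInner (vOp ξ) η = finsuppInner ξ (vdOp η) := by
  rw [vOp_eq_weightedShift (1 : ℝ), vdOp_eq_weightedShift (1 : ℝ)]
  exact finsuppInner_weightedShift_left 1 rfl LinearMap.IsSymmetric.one ξ η

theorem finsuppInner_nOp_left (hq : 0 ≤ q) {A : K →L[ℂ] K} (hA : (A : K →ₗ[ℂ] K).IsSymmetric)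
    (ξ η : ℤ × ℤ →₀ K) : finsuppInner (nOp q A ξ) η = finsuppInner ξ (ndOp q A η) := by
  rw [nOp_eq_weightedShift hq, ndOp_eq_weightedShift hq]
  exact finsuppInner_weightedShift_left _ rfl hA ξ η

theorem finsuppInner_EOp_left (hq : 0 < q) (hA : (A : K →ₗ[ℂ] K).IsSymmetric)
    (hH : (H : K →ₗ[ℂ] K).IsSymmetric) (hAH : Commute A H) (ξ η : ℤ × ℤ →₀ K) :
    finsuppInner (EOp q ε A H ξ) η = finsuppInner ξ (FOp q ε A H η) := by
  rw [EOp_eq_weightedShift hq, FOp_eq_weightedShift hq]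
  exact finsuppInner_weightedShift_left _ rfl (isSymmetric_ladderCoeff hA hH hAH) ξ η

theorem finsuppInner_KOp_left (q ε : ℝ) {H : K →L[ℂ] K} (hH : (H : K →ₗ[ℂ] K).IsSymmetric)
    (ξ η : ℤ × ℤ →₀ K) : finsuppInner (KOp q ε H ξ) η = finsuppInner ξ (KOp q ε H η) := by
  rw [KOp_eq_weightedShift]
  exact finsuppInner_weightedShift_left _ rfl (hH.smul (Complex.conj_ofReal ε)) ξ η

theorem vdOp_mul_vOp : (vdOp * vOp : Module.End ℂ (ℤ × ℤ →₀ K)) = 1 := by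
  rw [vdOp_eq_weightedShift 1, vOp_eq_weightedShift 1, weightedShift_mul one_ne_zero,
    one_zpow, one_smul, add_zero, mul_one]
  exact weightedShift_zero_zero_one 1

theorem vOp_mul_vdOp : (vOp * vdOp : Module.End ℂ (ℤ × ℤ →₀ K)) = 1 := by
  rw [vdOp_eq_weightedShift 1, vOp_eq_weightedShift 1, weightedShift_mul one_ne_zero,
    one_zpow, one_smul, add_zero, mul_one]
  exact weightedShift_zero_zero_one 1

theorem nOp_mul_ndOp (hq : 0 < q) (A : K →L[ℂ] K) :
    nOp q A * ndOp q A = ndOp q A * nOp q A := by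
  rw [nOp_eq_weightedShift hq.le, ndOp_eq_weightedShift hq.le,
    weightedShift_mul_eq_smul_mul (ofReal_sqrt_ne_zero hq) (.refl _)]
  simp

theorem nOp_mul_vOp (hq : 0 < q) (A : K →L[ℂ] K) :
    nOp q A * vOp = (q : ℂ) • (vOp * nOp q A) := by
  rw [nOp_eq_weightedShift hq.le, vOp_eq_weightedShift (√q : ℂ),
    weightedShift_mul_eq_smul_mul (ofReal_sqrt_ne_zero hq) (.one_right _)]
  simp [zpow_ofNat, ofReal_sqrt_sq hq.le]

theorem KOp_mul_KinvOp (hq : 0 < q) (hε : ε ^ 2 = 1) (H : K →L[ℂ] K) [Invertible H] :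
    KOp q ε H * KinvOp q ε H = 1 := by
  have hcoeff : ((ε : ℂ) • (H : K →ₗ[ℂ] K)) * ((ε : ℂ) • ((⅟H : K →L[ℂ] K) : K →ₗ[ℂ] K)) = 1 := by
    rw [smul_mul_smul_comm, ← ContinuousLinearMap.toLinearMap_mul, mul_invOf_self, ← sq,
      ← Complex.ofReal_pow, hε, Complex.ofReal_one, one_smul, ContinuousLinearMap.toLinearMap_one]
  rw [KOp_eq_weightedShift, KinvOp_eq_weightedShift,
    weightedShift_mul (ofReal_sqrt_ne_zero hq), hcoeff]
  simp [weightedShift_zero_zero_one]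

theorem KinvOp_mul_KOp (hq : 0 < q) (hε : ε ^ 2 = 1) (H : K →L[ℂ] K) [Invertible H] :
    KinvOp q ε H * KOp q ε H = 1 := by
  have hcomm : Commute (KinvOp q ε H) (KOp q ε H) := by
    rw [Commute, SemiconjBy, KOp_eq_weightedShift, KinvOp_eq_weightedShift,
      weightedShift_mul_eq_smul_mul (ofReal_sqrt_ne_zero hq)
        (((commute_toLinearMap (commute_invOf H).symm).smul_left _).smul_right _)]
    simp
  rw [hcomm.eq, KOp_mul_KinvOp hq hε]

theorem KOp_mul_FOp (hq : 0 < q) (hAH : Commute A H) :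
    KOp q ε H * FOp q ε A H = (q : ℂ) • (FOp q ε A H * KOp q ε H) := by
  rw [KOp_eq_weightedShift, FOp_eq_weightedShift hq,
    weightedShift_mul_eq_smul_mul (ofReal_sqrt_ne_zero hq)
      ((commute_right_ladderCoeff hAH).smul_left _)]
  simp [zpow_ofNat, ofReal_sqrt_sq hq.le]

theorem KOp_mul_EOp (hq : 0 < q) (hAH : Commute A H) :
    KOp q ε H * EOp q ε A H = (q : ℂ)⁻¹ • (EOp q ε A H * KOp q ε H) := by
  rw [KOp_eq_weightedShift, EOp_eq_weightedShift hq,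
    weightedShift_mul_eq_smul_mul (ofReal_sqrt_ne_zero hq)
      ((commute_right_ladderCoeff hAH).smul_left _)]
  simp [zpow_ofNat, ofReal_sqrt_sq hq.le]

theorem EOp_mul_FOp (hq : 0 < q) :
    EOp q ε A H * FOp q ε A H = FOp q ε A H * EOp q ε A H := by
  rw [EOp_eq_weightedShift hq, FOp_eq_weightedShift hq,
    weightedShift_mul_eq_smul_mul (ofReal_sqrt_ne_zero hq) (.refl _)]
  simp

theorem vOp_mul_weightedShift {s : ℂ} (hs : s ≠ 0) (ℓ : ℤ × ℤ →+ ℤ) (d : ℤ × ℤ)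
    (T : Module.End ℂ K) :
    vOp * weightedShift s ℓ d T = s ^ ℓ (1, 1) • (weightedShift s ℓ d T * vOp) := by
  have hℓ : ℓ (-1, -1) = -ℓ (1, 1) := map_neg ℓ (1, 1)
  rw [vOp_eq_weightedShift s, weightedShift_mul_eq_smul_mul hs (.one_left _), hℓ,
    AddMonoidHom.zero_apply, zero_sub, neg_neg]

theorem vdOp_mul_weightedShift {s : ℂ} (hs : s ≠ 0) (ℓ : ℤ × ℤ →+ ℤ) (d : ℤ × ℤ)
    (T : Module.End ℂ K) :
    vdOp * weightedShift s ℓ d T = s ^ (-ℓ (1, 1)) • (weightedShift s ℓ d T * vdOp) := by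
  rw [vdOp_eq_weightedShift s, weightedShift_mul_eq_smul_mul hs (.one_left _),
    AddMonoidHom.zero_apply, zero_sub]

theorem vOp_mul_FOp (hq : 0 < q) :
    vOp * FOp q ε A H = (√q : ℂ) • (FOp q ε A H * vOp) := by
  rw [FOp_eq_weightedShift hq, vOp_mul_weightedShift (ofReal_sqrt_ne_zero hq)]
  simp

theorem vOp_mul_EOp (hq : 0 < q) :
    vOp * EOp q ε A H = (√q : ℂ) • (EOp q ε A H * vOp) := by
  rw [EOp_eq_weightedShift hq, vOp_mul_weightedShift (ofReal_sqrt_ne_zero hq)]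
  simp

theorem vOp_mul_KOp (hq : 0 < q) (ε : ℝ) (H : K →L[ℂ] K) :
    vOp * KOp q ε H = (√q : ℂ) • (KOp q ε H * vOp) := by
  rw [KOp_eq_weightedShift, vOp_mul_weightedShift (ofReal_sqrt_ne_zero hq)]
  simp

theorem vdOp_mul_FOp (hq : 0 < q) :
    vdOp * FOp q ε A H = (√q : ℂ)⁻¹ • (FOp q ε A H * vdOp) := by
  rw [FOp_eq_weightedShift hq, vdOp_mul_weightedShift (ofReal_sqrt_ne_zero hq)]
  simp

theorem vdOp_mul_EOp (hq : 0 < q) :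
    vdOp * EOp q ε A H = (√q : ℂ)⁻¹ • (EOp q ε A H * vdOp) := by
  rw [EOp_eq_weightedShift hq, vdOp_mul_weightedShift (ofReal_sqrt_ne_zero hq)]
  simp

theorem vdOp_mul_KOp (hq : 0 < q) (ε : ℝ) (H : K →L[ℂ] K) :
    vdOp * KOp q ε H = (√q : ℂ)⁻¹ • (KOp q ε H * vdOp) := by
  rw [KOp_eq_weightedShift, vdOp_mul_weightedShift (ofReal_sqrt_ne_zero hq)]
  simp

theorem nOp_mul_EOp (hq : 0 < q) (hAH : Commute A H) :
    nOp q A * EOp q ε A H = (√q : ℂ) • (EOp q ε A H * nOp q A) := by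
  rw [nOp_eq_weightedShift hq.le, EOp_eq_weightedShift hq,
    weightedShift_mul_eq_smul_mul (ofReal_sqrt_ne_zero hq) (commute_left_ladderCoeff hAH)]
  simp

theorem ndOp_mul_FOp (hq : 0 < q) (hAH : Commute A H) :
    ndOp q A * FOp q ε A H = (√q : ℂ)⁻¹ • (FOp q ε A H * ndOp q A) := by
  rw [ndOp_eq_weightedShift hq.le, FOp_eq_weightedShift hq,
    weightedShift_mul_eq_smul_mul (ofReal_sqrt_ne_zero hq) (commute_left_ladderCoeff hAH)]
  simp

theorem nOp_mul_KOp (hq : 0 < q) (ε : ℝ) {A H : K →L[ℂ] K} (hAH : Commute A H) :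
    nOp q A * KOp q ε H = (√q : ℂ) • (KOp q ε H * nOp q A) := by
  rw [nOp_eq_weightedShift hq.le, KOp_eq_weightedShift,
    weightedShift_mul_eq_smul_mul (ofReal_sqrt_ne_zero hq) ((commute_toLinearMap hAH).smul_right _)]
  simp

theorem ndOp_mul_KOp (hq : 0 < q) (ε : ℝ) {A H : K →L[ℂ] K} (hAH : Commute A H) :
    ndOp q A * KOp q ε H = (√q : ℂ)⁻¹ • (KOp q ε H * ndOp q A) := by
  rw [ndOp_eq_weightedShift hq.le, KOp_eq_weightedShift,
    weightedShift_mul_eq_smul_mul (ofReal_sqrt_ne_zero hq) ((commute_toLinearMap hAH).smul_right _)]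
  simp

theorem nOp_mul_FOp (hq : 0 < q) (hq1 : q ≠ 1) (hAH : Commute A H) :
    nOp q A * FOp q ε A H = (√q : ℂ) • (FOp q ε A H * nOp q A) + KinvOp q ε H * vdOp := by
  have hs := ofReal_sqrt_ne_zero hq
  let C : Module.End ℂ K → Module.End ℂ (ℤ × ℤ →₀ K) :=
    weightedShift (√q : ℂ) (-(2 • .fst ℤ ℤ) + .snd ℤ ℤ) (1, 1)
  let L : Module.End ℂ K := ladderCoeff q ε A H
  have hnF : nOp q A * FOp q ε A H = (q : ℂ)⁻¹ • C (A * L) := by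
    rw [nOp_eq_weightedShift hq.le, FOp_eq_weightedShift hq, weightedShift_mul hs]
    simp [C, L, zpow_ofNat, ofReal_sqrt_sq hq.le]
  have hFn : FOp q ε A H * nOp q A = (√q : ℂ) • C (A * L) := by
    rw [nOp_eq_weightedShift hq.le, FOp_eq_weightedShift hq, weightedShift_mul hs,
      ← (commute_left_ladderCoeff hAH).eq, add_comm (AddMonoidHom.snd ℤ ℤ)]
    simp [C, L]
  have hKv : KinvOp q ε H * vdOp = (√q : ℂ)⁻¹ • C ((ε : ℂ) • (⅟H : K →L[ℂ] K)) := by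
    rw [KinvOp_eq_weightedShift, vdOp_eq_weightedShift (√q : ℂ), weightedShift_mul hs]
    simp [C]
  rw [hnF, hFn, hKv, smul_smul, ← sq, ofReal_sqrt_sq hq.le]
  simp only [C, ← weightedShift_smul, ← weightedShift_add, L, inv_smul_mul_ladderCoeff hq hq1]

theorem ndOp_mul_EOp (hq : 0 < q) (hq1 : q ≠ 1) (hAH : Commute A H) :
    ndOp q A * EOp q ε A H =
      (√q : ℂ)⁻¹ • (EOp q ε A H * ndOp q A) - (q : ℂ)⁻¹ • (KinvOp q ε H * vOp) := by
  have hs := ofReal_sqrt_ne_zero hq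
  let C : Module.End ℂ K → Module.End ℂ (ℤ × ℤ →₀ K) :=
    weightedShift (√q : ℂ) (-(2 • .fst ℤ ℤ) + .snd ℤ ℤ) (-1, -1)
  let L : Module.End ℂ K := ladderCoeff q ε A H
  have hnE : ndOp q A * EOp q ε A H = (q : ℂ) • C (A * L) := by
    rw [ndOp_eq_weightedShift hq.le, EOp_eq_weightedShift hq, weightedShift_mul hs]
    simp [C, L, zpow_ofNat, ofReal_sqrt_sq hq.le]
  have hEn : EOp q ε A H * ndOp q A = (√q : ℂ)⁻¹ • C (A * L) := by
    rw [ndOp_eq_weightedShift hq.le, EOp_eq_weightedShift hq, weightedShift_mul hs,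
      ← (commute_left_ladderCoeff hAH).eq, add_comm (AddMonoidHom.snd ℤ ℤ)]
    simp [C, L]
  have hKv : KinvOp q ε H * vOp = (√q : ℂ) • C ((ε : ℂ) • (⅟H : K →L[ℂ] K)) := by
    rw [KinvOp_eq_weightedShift, vOp_eq_weightedShift (√q : ℂ), weightedShift_mul hs]
    simp [C]
  have hinv : (q : ℂ)⁻¹ * √q = (√q : ℂ)⁻¹ := by
    rw [← ofReal_sqrt_sq hq.le]
    field_simp
  rw [hnE, hEn, hKv, smul_smul, smul_smul, hinv, ← sq, inv_pow, ofReal_sqrt_sq hq.le,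
    eq_sub_iff_add_eq]
  simp only [C, ← weightedShift_smul, ← weightedShift_add, L, inv_smul_mul_ladderCoeff hq hq1]

end Operators

end Stmt9

open Stmt9 in
theorem stmt_9_general {K : Type*} [NormedAddCommGroup K] [InnerProductSpace ℂ K]
    (q : ℝ) (hq0 : 0 < q) (hq1 : q ≠ 1)
    (ε : ℝ) (hε : ε = 1 ∨ ε = -1)
    (A H : K →L[ℂ] K) [Invertible A] [Invertible H]
    (hA : (A : K →ₗ[ℂ] K).IsSymmetric) (hH : (H : K →ₗ[ℂ] K).IsSymmetric)
    (hAH : Commute A H) :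
    (∀ ξ η : ℤ × ℤ →₀ K,
      finsuppInner ((vOp : Module.End ℂ (ℤ × ℤ →₀ K)) ξ) η = finsuppInner ξ (vdOp η)) ∧
    (∀ ξ η : ℤ × ℤ →₀ K, finsuppInner (nOp q A ξ) η = finsuppInner ξ (ndOp q A η)) ∧
    (∀ ξ η : ℤ × ℤ →₀ K,
      finsuppInner (EOp q ε A H ξ) η = finsuppInner ξ (FOp q ε A H η)) ∧
    (∀ ξ η : ℤ × ℤ →₀ K,
      finsuppInner (KOp q ε H ξ) η = finsuppInner ξ (KOp q ε H η)) ∧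
    (vdOp * vOp : Module.End ℂ (ℤ × ℤ →₀ K)) = 1 ∧
    (vOp * vdOp : Module.End ℂ (ℤ × ℤ →₀ K)) = 1 ∧
    nOp q A * ndOp q A = ndOp q A * nOp q A ∧
    nOp (K := K) q A * vOp = (q : ℂ) • (vOp * nOp q A) ∧
    KOp q ε H * KinvOp q ε H = 1 ∧ KinvOp q ε H * KOp q ε H = 1 ∧
    KOp q ε H * FOp q ε A H = (q : ℂ) • (FOp q ε A H * KOp q ε H) ∧
    KOp q ε H * EOp q ε A H = (q : ℂ)⁻¹ • (EOp q ε A H * KOp q ε H) ∧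
    EOp q ε A H * FOp q ε A H = FOp q ε A H * EOp q ε A H ∧
    vOp * FOp q ε A H = (√q : ℂ) • (FOp q ε A H * vOp) ∧
    vOp * EOp q ε A H = (√q : ℂ) • (EOp q ε A H * vOp) ∧
    vOp * KOp q ε H = (√q : ℂ) • (KOp q ε H * vOp) ∧
    vdOp * FOp q ε A H = (√q : ℂ)⁻¹ • (FOp q ε A H * vdOp) ∧
    vdOp * EOp q ε A H = (√q : ℂ)⁻¹ • (EOp q ε A H * vdOp) ∧
    vdOp * KOp q ε H = (√q : ℂ)⁻¹ • (KOp q ε H * vdOp) ∧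
    nOp q A * FOp q ε A H
      = (√q : ℂ) • (FOp q ε A H * nOp q A) + KinvOp q ε H * vdOp ∧
    nOp q A * EOp q ε A H = (√q : ℂ) • (EOp q ε A H * nOp q A) ∧
    nOp q A * KOp q ε H = (√q : ℂ) • (KOp q ε H * nOp q A) ∧
    ndOp q A * FOp q ε A H = (√q : ℂ)⁻¹ • (FOp q ε A H * ndOp q A) ∧
    ndOp q A * EOp q ε A H
      = (√q : ℂ)⁻¹ • (EOp q ε A H * ndOp q A)
        - (q : ℂ)⁻¹ • (KinvOp q ε H * vOp) ∧
    ndOp q A * KOp q ε H = (√q : ℂ)⁻¹ • (KOp q ε H * ndOp q A) := by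
  have hε2 : ε ^ 2 = 1 := by
    rcases hε with rfl | rfl <;> norm_num
  exact ⟨finsuppInner_vOp_left, finsuppInner_nOp_left hq0.le hA,
    finsuppInner_EOp_left hq0 hA hH hAH, finsuppInner_KOp_left q ε hH,
    vdOp_mul_vOp, vOp_mul_vdOp, nOp_mul_ndOp hq0 A, nOp_mul_vOp hq0 A,
    KOp_mul_KinvOp hq0 hε2 H, KinvOp_mul_KOp hq0 hε2 H,
    KOp_mul_FOp hq0 hAH, KOp_mul_EOp hq0 hAH, EOp_mul_FOp hq0,
    vOp_mul_FOp hq0, vOp_mul_EOp hq0, vOp_mul_KOp hq0 ε H,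
    vdOp_mul_FOp hq0, vdOp_mul_EOp hq0, vdOp_mul_KOp hq0 ε H,
    nOp_mul_FOp hq0 hq1 hAH, nOp_mul_EOp hq0 hAH, nOp_mul_KOp hq0 ε hAH,
    ndOp_mul_FOp hq0 hAH, ndOp_mul_EOp hq0 hq1 hAH, ndOp_mul_KOp hq0 ε hAH⟩

open Stmt9 in
/-- With `0 < q < 1`, `ε ∈ {1,-1}` and `A, H` commuting bounded self-adjoint
invertible operators on a Hilbert space `K`, the operators `v, v†, n, n†, E, F, K̂, K̂⁻¹`
defined above on the space of finitely supported functions `ℤ² →₀ K` form a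
∗-representation of the left cross product ∗-algebra `U_q(e₂) ⋉ O(E_q(2))`. -/
theorem stmt_9 {K : Type*} [NormedAddCommGroup K] [InnerProductSpace ℂ K]
    [CompleteSpace K]
    (q : ℝ) (hq0 : 0 < q) (hq1 : q < 1)
    (ε : ℝ) (hε : ε = 1 ∨ ε = -1)
    (A H : K →L[ℂ] K) [Invertible A] [Invertible H]
    (hA : IsSelfAdjoint A) (hH : IsSelfAdjoint H) (hAH : A * H = H * A) :
    (∀ ξ η : ℤ × ℤ →₀ K,
      finsuppInner ((vOp : Module.End ℂ (ℤ × ℤ →₀ K)) ξ) η = finsuppInner ξ (vdOp η)) ∧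
    (∀ ξ η : ℤ × ℤ →₀ K, finsuppInner (nOp q A ξ) η = finsuppInner ξ (ndOp q A η)) ∧
    (∀ ξ η : ℤ × ℤ →₀ K,
      finsuppInner (EOp q ε A H ξ) η = finsuppInner ξ (FOp q ε A H η)) ∧
    (∀ ξ η : ℤ × ℤ →₀ K,
      finsuppInner (KOp q ε H ξ) η = finsuppInner ξ (KOp q ε H η)) ∧
    (vdOp * vOp : Module.End ℂ (ℤ × ℤ →₀ K)) = 1 ∧
    (vOp * vdOp : Module.End ℂ (ℤ × ℤ →₀ K)) = 1 ∧
    nOp q A * ndOp q A = ndOp q A * nOp q A ∧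
    nOp (K := K) q A * vOp = (q : ℂ) • (vOp * nOp q A) ∧
    KOp q ε H * KinvOp q ε H = 1 ∧ KinvOp q ε H * KOp q ε H = 1 ∧
    KOp q ε H * FOp q ε A H = (q : ℂ) • (FOp q ε A H * KOp q ε H) ∧
    KOp q ε H * EOp q ε A H = (q : ℂ)⁻¹ • (EOp q ε A H * KOp q ε H) ∧
    EOp q ε A H * FOp q ε A H = FOp q ε A H * EOp q ε A H ∧
    vOp * FOp q ε A H = (Real.sqrt q : ℂ) • (FOp q ε A H * vOp) ∧
    vOp * EOp q ε A H = (Real.sqrt q : ℂ) • (EOp q ε A H * vOp) ∧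
    vOp * KOp q ε H = (Real.sqrt q : ℂ) • (KOp q ε H * vOp) ∧
    vdOp * FOp q ε A H = (Real.sqrt q : ℂ)⁻¹ • (FOp q ε A H * vdOp) ∧
    vdOp * EOp q ε A H = (Real.sqrt q : ℂ)⁻¹ • (EOp q ε A H * vdOp) ∧
    vdOp * KOp q ε H = (Real.sqrt q : ℂ)⁻¹ • (KOp q ε H * vdOp) ∧
    nOp q A * FOp q ε A H
      = (Real.sqrt q : ℂ) • (FOp q ε A H * nOp q A) + KinvOp q ε H * vdOp ∧
    nOp q A * EOp q ε A H = (Real.sqrt q : ℂ) • (EOp q ε A H * nOp q A) ∧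
    nOp q A * KOp q ε H = (Real.sqrt q : ℂ) • (KOp q ε H * nOp q A) ∧
    ndOp q A * FOp q ε A H = (Real.sqrt q : ℂ)⁻¹ • (FOp q ε A H * ndOp q A) ∧
    ndOp q A * EOp q ε A H
      = (Real.sqrt q : ℂ)⁻¹ • (EOp q ε A H * ndOp q A)
        - (q : ℂ)⁻¹ • (KinvOp q ε H * vOp) ∧
    ndOp q A * KOp q ε H = (Real.sqrt q : ℂ)⁻¹ • (KOp q ε H * ndOp q A) := by
  exact stmt_9_general q hq0 hq1.ne ε hε A H
    (ContinuousLinearMap.isSelfAdjoint_iff_isSymmetric.1 hA)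
    (ContinuousLinearMap.isSelfAdjoint_iff_isSymmetric.1 hH) hAH

end
end
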